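/- arXiv:math/0511515 — 6 statements merged into one kernel-verified Lean document; each statement's English description precedes it below -/
import Mathlib

section
/- The map Φ sending a plane tree t with p = #t vertices to the sequence (k_{u_0}(t), k_{u_1}(t), ..., k_{u_{p-1}}(t)) of numbers of children of its vertices listed in lexicographical order is a bijection from the set of all plane trees onto the set S of all finite sequences (m_1, ..., m_p) of nonnegative integers (p ≥ 1) satisfying m_1 + m_2 + ... + m_i ≥ i for every i ∈ {1, ..., p-1} and m_1 + m_2 + ... + m_p = p - 1. -/
/-- A plane tree (finite rooted ordered tree), encoded as a finite set of finite sequences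
of positive integers (vertices are words; `[]` is the root). -/
def IsPlaneTree (t : Finset (List ℕ)) : Prop :=
  [] ∈ t ∧
  (∀ u ∈ t, u ≠ [] → u.dropLast ∈ t) ∧
  (∀ u ∈ t, ∃ k : ℕ, ∀ j : ℕ, u ++ [j] ∈ t ↔ 1 ≤ j ∧ j ≤ k)

/-- `k_u(t)`, the number of children of the vertex `u` in `t`. -/
def childCount (t : Finset (List ℕ)) (u : List ℕ) : ℕ :=
  (t.filter fun v => v ≠ [] ∧ v.dropLast = u).card

/-- The vertices of `t` listed in lexicographical order. -/
def vertexList (t : Finset (List ℕ)) : List (List ℕ) :=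
  t.sort (· ≤ ·)

/-- The map `Φ` sending a tree to the sequence of numbers of children of its vertices,
listed in lexicographical order. -/
def PhiMap (t : Finset (List ℕ)) : List ℕ :=
  (vertexList t).map (childCount t)

/-- The set `S` of finite sequences `(m_1, …, m_p)` of nonnegative integers with `p ≥ 1`,
`m_1 + ⋯ + m_i ≥ i` for `1 ≤ i ≤ p - 1`, and `m_1 + ⋯ + m_p = p - 1`. -/
def IsLukasiewicz (m : List ℕ) : Prop :=
  1 ≤ m.length ∧
  (∀ i : ℕ, 1 ≤ i → i < m.length → i ≤ (m.take i).sum) ∧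
  m.sum = m.length - 1

/-!
Allowing plane forests with arbitrary root words makes the statement amenable to induction. The
least vertex `a` of a forest is a root, and its number of children `k` is the first entry of the
code. Removing `a` replaces this root by the `k` roots `a1, …, ak` and deletes the first entry of
the code; correspondingly, a walk started at `r + 1` whose first entry is `k` continues as a walk
started at `r + k`. Since `a` is also the least root, the roots and the code determine each step,
which gives injectivity. Run in reverse, the same step builds the forest of a given code, as long
as no root is a prefix of another one.
-/

lemma lt_append_singleton {α : Type*} [LinearOrder α] (u : List α) (j : α) : u < u ++ [j] := by
  induction u <;> simp_all

lemma dropLast_lt_self {α : Type*} [LinearOrder α] {u : List α} (hu : u ≠ []) : u.dropLast < u := by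
  conv_rhs => rw [← List.dropLast_append_getLast hu]
  exact lt_append_singleton _ _

/-- The children of the word `u` that belong to the finite set of words `s`; `childCount s u` is
its cardinality. -/
def childSet (s : Finset (List ℕ)) (u : List ℕ) : Finset (List ℕ) :=
  s.filter fun v => v ≠ [] ∧ v.dropLast = u

/-- The words `u1, …, uk`, which are the children of a vertex `u` with `k` children in a plane
forest. -/
def firstChildren (u : List ℕ) (k : ℕ) : Finset (List ℕ) :=
  (Finset.Icc 1 k).image fun j => u ++ [j]

/-- The roots of the forest spanned by a finite set of words: the words without parent in `s`. -/
def rootSet (s : Finset (List ℕ)) : Finset (List ℕ) :=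
  s.filter fun v => v = [] ∨ v.dropLast ∉ s

/-- A plane forest: a finite set of words in which the children of each vertex `u` are
`u1, …, uk` for some `k`. Its roots are arbitrary words, so that removing a root from a forest
leaves a forest. -/
def IsPlaneForest (s : Finset (List ℕ)) : Prop :=
  ∀ u ∈ s, ∃ k, childSet s u = firstChildren u k

/-- The codes `m = (m_1, …, m_p)` of plane forests with `r` roots: the walk started at `r` with
steps `m_i - 1` is positive before time `p` and vanishes at time `p`. Both conditions are written
without subtraction. -/
def IsLukasiewiczFrom (r : ℕ) (m : List ℕ) : Prop :=
  (∀ i < m.length, i < r + (m.take i).sum) ∧ r + m.sum = m.length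

section Words

variable {s : Finset (List ℕ)} {u v : List ℕ} {k : ℕ}

lemma mem_childSet : v ∈ childSet s u ↔ v ∈ s ∧ ∃ j, u ++ [j] = v := by
  rw [childSet, Finset.mem_filter]
  refine and_congr_right fun _ => ⟨?_, ?_⟩
  · rintro ⟨hv, rfl⟩
    exact ⟨v.getLast hv, List.dropLast_append_getLast hv⟩
  · rintro ⟨j, rfl⟩
    simp

lemma mem_firstChildren : v ∈ firstChildren u k ↔ ∃ j, (1 ≤ j ∧ j ≤ k) ∧ u ++ [j] = v := by
  simp only [firstChildren, Finset.mem_image, Finset.mem_Icc]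

lemma card_firstChildren (u : List ℕ) (k : ℕ) : (firstChildren u k).card = k := by
  rw [firstChildren, Finset.card_image_of_injective _ fun i j h => by simpa using h,
    Nat.card_Icc, Nat.add_sub_cancel]

lemma childSet_eq_firstChildren_iff :
    childSet s u = firstChildren u k ↔ ∀ j, u ++ [j] ∈ s ↔ 1 ≤ j ∧ j ≤ k := by
  simp only [Finset.ext_iff, mem_childSet, mem_firstChildren]
  refine ⟨fun h j => by simpa using h (u ++ [j]), fun h v => ⟨?_, ?_⟩⟩
  · rintro ⟨hv, j, rfl⟩
    exact ⟨j, (h j).1 hv, rfl⟩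
  · rintro ⟨j, hj, rfl⟩
    exact ⟨(h j).2 hj, j, rfl⟩

lemma IsPlaneForest.childSet_eq (hs : IsPlaneForest s) (hu : u ∈ s) :
    childSet s u = firstChildren u (childCount s u) := by
  obtain ⟨k, hk⟩ := hs u hu
  have : childCount s u = k := (congrArg Finset.card hk).trans (card_firstChildren u k)
  rw [this, hk]

lemma rootSet_eq_singleton_nil_iff :
    rootSet s = {[]} ↔ [] ∈ s ∧ ∀ u ∈ s, u ≠ [] → u.dropLast ∈ s := by
  simp only [rootSet, Finset.ext_iff, Finset.mem_filter, Finset.mem_singleton]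
  grind

lemma isPlaneTree_iff : IsPlaneTree s ↔ IsPlaneForest s ∧ rootSet s = {[]} := by
  simp only [IsPlaneTree, IsPlaneForest, childSet_eq_firstChildren_iff,
    rootSet_eq_singleton_nil_iff, and_comm, and_left_comm]

lemma rootSet_subset (s : Finset (List ℕ)) : rootSet s ⊆ s :=
  Finset.filter_subset ..

lemma childSet_rootSet (hu : u ∉ s) : childSet (rootSet s) u = childSet s u := by
  simp only [childSet, rootSet, Finset.ext_iff, Finset.mem_filter]
  grind

lemma exists_mem_rootSet_le (hv : v ∈ s) : ∃ r ∈ rootSet s, r ≤ v := by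
  have hs : s.Nonempty := ⟨v, hv⟩
  refine ⟨s.min' hs, Finset.mem_filter.2 ⟨s.min'_mem hs, ?_⟩, s.min'_le v hv⟩
  refine or_iff_not_imp_left.2 fun hne hmem => ?_
  exact (dropLast_lt_self hne).not_ge (s.min'_le _ hmem)

end Words

section InsertMin

variable {s : Finset (List ℕ)} {a u : List ℕ}

lemma childSet_insert_of_le (hau : a ≤ u) : childSet (insert a s) u = childSet s u := by
  refine (Finset.filter_insert ..).trans (if_neg ?_)
  rintro ⟨hne, rfl⟩
  exact (dropLast_lt_self hne).not_ge hau

lemma childCount_insert_of_le (hau : a ≤ u) : childCount (insert a s) u = childCount s u :=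
  congrArg Finset.card (childSet_insert_of_le hau)

lemma phiMap_insert (ha : ∀ x ∈ s, a < x) :
    PhiMap (insert a s) = childCount s a :: PhiMap s := by
  have has : a ∉ s := fun h => (ha a h).false
  have htail : (vertexList s).map (childCount (insert a s)) = PhiMap s :=
    List.map_congr_left fun u hu =>
      childCount_insert_of_le (ha u ((Finset.mem_sort _).1 hu)).le
  rw [PhiMap, vertexList, Finset.sort_insert _ (fun x hx => (ha x hx).le) has, List.map_cons,
    childCount_insert_of_le le_rfl, ← vertexList, htail]

lemma isPlaneForest_insert (ha : ∀ x ∈ s, a < x) :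
    IsPlaneForest (insert a s) ↔ (∃ k, childSet s a = firstChildren a k) ∧ IsPlaneForest s := by
  rw [IsPlaneForest, Finset.forall_mem_insert, childSet_insert_of_le le_rfl, IsPlaneForest]
  exact and_congr_right fun _ => forall₂_congr fun u hu => by
    rw [childSet_insert_of_le (ha u hu).le]

lemma rootSet_insert (ha : ∀ x ∈ s, a < x) :
    rootSet (insert a s) = insert a (rootSet s \ childSet s a) := by
  have hroot : a = [] ∨ a.dropLast ∉ insert a s := by
    refine or_iff_not_imp_left.2 fun hne hmem => ?_
    have hlt := dropLast_lt_self hne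
    exact (Finset.mem_insert.1 hmem).elim hlt.ne fun h => hlt.not_gt (ha _ h)
  simp only [rootSet, childSet, Finset.ext_iff, Finset.mem_filter, Finset.mem_insert,
    Finset.mem_sdiff] at hroot ⊢
  grind

lemma childSet_subset_rootSet (ha : a ∉ s) : childSet s a ⊆ rootSet s :=
  childSet_rootSet ha ▸ Finset.filter_subset ..

lemma rootSet_eq_erase_union (ha : ∀ x ∈ s, a < x) :
    rootSet s = (rootSet (insert a s)).erase a ∪ childSet s a := by
  have has : a ∉ s := fun h => (ha a h).false
  have har : a ∉ rootSet s \ childSet s a := fun h =>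
    has (rootSet_subset s (Finset.sdiff_subset h))
  rw [rootSet_insert ha, Finset.erase_insert har,
    Finset.sdiff_union_of_subset (childSet_subset_rootSet has)]

end InsertMin

section LukasiewiczSequences

variable {r k : ℕ} {m : List ℕ}

lemma isLukasiewicz_iff : IsLukasiewicz m ↔ IsLukasiewiczFrom 1 m := by
  refine ⟨fun ⟨hpos, hwalk, hsum⟩ => ⟨fun i hi => ?_, by omega⟩,
    fun ⟨hwalk, hsum⟩ => ⟨by omega, fun i _ hi => ?_, by omega⟩⟩
  · rcases i.eq_zero_or_pos with rfl | hi0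
    · simp
    · have := hwalk i hi0 hi
      omega
  · have := hwalk i hi
    omega

lemma isLukasiewiczFrom_nil : IsLukasiewiczFrom r [] ↔ r = 0 := by
  simp [IsLukasiewiczFrom]

lemma not_isLukasiewiczFrom_zero_cons : ¬ IsLukasiewiczFrom 0 (k :: m) := fun h => by
  simpa using h.1 0 (by simp)

lemma isLukasiewiczFrom_succ_cons :
    IsLukasiewiczFrom (r + 1) (k :: m) ↔ IsLukasiewiczFrom (r + k) m := by
  simp only [IsLukasiewiczFrom, List.length_cons, List.sum_cons, Nat.forall_lt_succ_left,
    List.take_zero, List.sum_nil, List.take_succ_cons]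
  grind

end LukasiewiczSequences

section Coding

variable {s t P : Finset (List ℕ)} {a u : List ℕ} {k : ℕ} {m : List ℕ}

theorem isLukasiewiczFrom_phiMap (s : Finset (List ℕ)) :
    IsLukasiewiczFrom (rootSet s).card (PhiMap s) := by
  induction s using Finset.induction_on_min with
  | empty => simp [IsLukasiewiczFrom, rootSet, PhiMap, vertexList]
  | insert a s ha ih =>
    have has : a ∉ s := fun h => (ha a h).false
    have har : a ∉ rootSet s \ childSet s a := fun h =>
      has (rootSet_subset s (Finset.sdiff_subset h))
    have hcard : (rootSet s \ childSet s a).card + childCount s a = (rootSet s).card :=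
      Finset.card_sdiff_add_card_eq_card (childSet_subset_rootSet has)
    rwa [rootSet_insert ha, Finset.card_insert_of_notMem har, phiMap_insert ha,
      isLukasiewiczFrom_succ_cons, hcard]

lemma phiMap_eq_nil_iff : PhiMap s = [] ↔ s = ∅ := by
  rw [PhiMap, List.map_eq_nil_iff, vertexList, ← List.length_eq_zero_iff, Finset.length_sort,
    Finset.card_eq_zero]

lemma le_of_rootSet_insert_eq {b : List ℕ} (ha : ∀ x ∈ s, a < x) (hb : ∀ x ∈ t, b < x)
    (h : rootSet (insert a s) = rootSet (insert b t)) : b ≤ a := by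
  have hmem : a ∈ rootSet (insert b t) := by
    rw [← h, rootSet_insert ha]
    exact Finset.mem_insert_self ..
  exact (Finset.mem_insert.1 (rootSet_subset _ hmem)).elim ge_of_eq fun h =>
    (hb a h).le

theorem IsPlaneForest.eq_of_phiMap_eq (hs : IsPlaneForest s) (ht : IsPlaneForest t)
    (hroot : rootSet s = rootSet t) (hphi : PhiMap s = PhiMap t) : s = t := by
  induction s using Finset.induction_on_min generalizing t with
  | empty => exact (phiMap_eq_nil_iff.1 (hphi.symm.trans (phiMap_eq_nil_iff.2 rfl))).symm
  | insert a s ha ih =>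
    induction t using Finset.induction_on_min with
    | empty => exact phiMap_eq_nil_iff.1 (hphi.trans (phiMap_eq_nil_iff.2 rfl))
    | insert b t hb _ =>
      obtain rfl : a = b := (le_of_rootSet_insert_eq hb ha hroot.symm).antisymm
        (le_of_rootSet_insert_eq ha hb hroot)
      rw [phiMap_insert ha, phiMap_insert hb, List.cons.injEq] at hphi
      have hchild : childSet s a = childSet t a := by
        have hs_child := hs.childSet_eq (Finset.mem_insert_self a s)
        have ht_child := ht.childSet_eq (Finset.mem_insert_self a t)
        rw [childSet_insert_of_le le_rfl, childCount_insert_of_le le_rfl] at hs_child ht_child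
        rw [hs_child, ht_child, hphi.1]
      have hroot' : rootSet s = rootSet t := by
        rw [rootSet_eq_erase_union ha, rootSet_eq_erase_union hb, hroot, hchild]
      rw [ih ((isPlaneForest_insert ha).1 hs).2 ((isPlaneForest_insert hb).1 ht).2 hroot' hphi.2]

lemma prefix_of_mem_firstChildren {v : List ℕ} (hv : v ∈ firstChildren u k) : u <+: v := by
  obtain ⟨j, -, rfl⟩ := mem_firstChildren.1 hv
  exact List.prefix_append u [j]

lemma not_prefix_of_mem_erase (hP : IsAntichain (· <+: ·) (P : Set (List ℕ))) (hu : u ∈ P)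
    {v : List ℕ} (hv : v ∈ P.erase u) : ¬ u <+: v :=
  hP hu (Finset.mem_of_mem_erase hv) (Finset.ne_of_mem_erase hv).symm

lemma disjoint_erase_firstChildren (hP : IsAntichain (· <+: ·) (P : Set (List ℕ)))
    (hu : u ∈ P) (k : ℕ) : Disjoint (P.erase u) (firstChildren u k) :=
  Finset.disjoint_left.2 fun _ hv hv' =>
    not_prefix_of_mem_erase hP hu hv (prefix_of_mem_firstChildren hv')

lemma childSet_erase_union_firstChildren (hP : IsAntichain (· <+: ·) (P : Set (List ℕ)))
    (hu : u ∈ P) (k : ℕ) :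
    childSet (P.erase u ∪ firstChildren u k) u = firstChildren u k := by
  rw [childSet_eq_firstChildren_iff]
  intro j
  have hj : u ++ [j] ∉ P.erase u := fun h =>
    not_prefix_of_mem_erase hP hu h (List.prefix_append u [j])
  simp [hj, mem_firstChildren]

lemma isAntichain_erase_union_firstChildren
    (hP : IsAntichain (· <+: ·) (P : Set (List ℕ))) (hu : u ∈ P) (k : ℕ) :
    IsAntichain (· <+: ·) (↑(P.erase u ∪ firstChildren u k) : Set (List ℕ)) := by
  rw [Finset.coe_union, isAntichain_union]
  refine ⟨hP.subset (Finset.coe_subset.2 (P.erase_subset u)), ?_, ?_⟩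
  · intro v hv w hw hvw hpre
    obtain ⟨i, -, rfl⟩ := mem_firstChildren.1 hv
    obtain ⟨j, -, rfl⟩ := mem_firstChildren.1 hw
    exact hvw (hpre.eq_of_length (by simp))
  · intro v hv w hw hvw
    obtain ⟨j, -, rfl⟩ := mem_firstChildren.1 hw
    refine ⟨fun hpre => ?_, fun hpre => ?_⟩
    · rcases List.prefix_concat_iff.1 hpre with h | h
      · exact hvw h
      · exact hP (Finset.mem_of_mem_erase hv) hu (Finset.ne_of_mem_erase hv) h
    · exact not_prefix_of_mem_erase hP hu hv ((List.prefix_append u [j]).trans hpre)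

lemma min'_lt_of_mem_erase_union_firstChildren {v : List ℕ} (hP : P.Nonempty)
    (hv : v ∈ P.erase (P.min' hP) ∪ firstChildren (P.min' hP) k) : P.min' hP < v := by
  rcases Finset.mem_union.1 hv with h | h
  · exact P.min'_lt_of_mem_erase_min' hP h
  · obtain ⟨j, -, rfl⟩ := mem_firstChildren.1 h
    exact lt_append_singleton _ j

theorem exists_isPlaneForest_phiMap_eq (hP : IsAntichain (· <+: ·) (P : Set (List ℕ)))
    (hm : IsLukasiewiczFrom P.card m) :
    ∃ s, (IsPlaneForest s ∧ rootSet s = P) ∧ PhiMap s = m := by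
  induction m generalizing P with
  | nil =>
    obtain rfl : P = ∅ := Finset.card_eq_zero.1 (isLukasiewiczFrom_nil.1 hm)
    exact ⟨∅, ⟨by simp [IsPlaneForest], by simp [rootSet]⟩, phiMap_eq_nil_iff.2 rfl⟩
  | cons k m ih =>
    have hne : P.Nonempty := Finset.nonempty_iff_ne_empty.2 fun h =>
      not_isLukasiewiczFrom_zero_cons (by simpa [h] using hm)
    set u := P.min' hne
    have hu : u ∈ P := P.min'_mem hne
    have hdisj : Disjoint (P.erase u) (firstChildren u k) :=
      disjoint_erase_firstChildren hP hu k
    have hcard : (P.erase u ∪ firstChildren u k).card = (P.erase u).card + k := by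
      rw [Finset.card_union_of_disjoint hdisj, card_firstChildren]
    rw [← Finset.card_erase_add_one hu, isLukasiewiczFrom_succ_cons, ← hcard] at hm
    obtain ⟨s, ⟨hs, hroot⟩, rfl⟩ := ih (isAntichain_erase_union_firstChildren hP hu k) hm
    have hlt : ∀ x ∈ s, u < x := by
      intro x hx
      obtain ⟨r, hr, hrx⟩ := exists_mem_rootSet_le hx
      exact (min'_lt_of_mem_erase_union_firstChildren hne (hroot ▸ hr)).trans_le hrx
    have hchild : childSet s u = firstChildren u k := by
      rw [← childSet_rootSet fun h => (hlt u h).false, hroot,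
        childSet_erase_union_firstChildren hP hu]
    refine ⟨insert u s, ⟨(isPlaneForest_insert hlt).2 ⟨⟨k, hchild⟩, hs⟩, ?_⟩, ?_⟩
    · rw [rootSet_insert hlt, hroot, hchild, Finset.union_sdiff_cancel_right hdisj,
        Finset.insert_erase hu]
    · rw [phiMap_insert hlt, ← card_firstChildren u k, ← hchild]
      rfl

end Coding

theorem stmt0_general {P : Finset (List ℕ)} (hP : IsAntichain (· <+: ·) (P : Set (List ℕ))) :
    Set.BijOn PhiMap {s | IsPlaneForest s ∧ rootSet s = P} {m | IsLukasiewiczFrom P.card m} := by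
  refine ⟨?_, ?_, fun m hm => exists_isPlaneForest_phiMap_eq hP hm⟩
  · rintro s ⟨-, rfl⟩
    exact isLukasiewiczFrom_phiMap s
  · rintro s ⟨hs, hsP⟩ t ⟨ht, htP⟩ hphi
    exact hs.eq_of_phiMap_eq ht (hsP.trans htP.symm) hphi

/-- Proposition 1.1: `Φ` is a bijection from the set of all plane trees onto `S`. -/
theorem stmt0 : Set.BijOn PhiMap {t | IsPlaneTree t} {m | IsLukasiewicz m} := by
  simpa [isPlaneTree_iff, isLukasiewicz_iff] using stmt0_general (P := {[]}) (by simp)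
end

section
/- Let t be a plane tree with p = #t vertices, let h_t(n) = |u_n| (the length of the sequence u_n) be its height function, and let x_0 = 0, x_n = Σ_{i=1}^n (k_{u_{i-1}}(t) - 1) for 1 ≤ n ≤ p be its Lukasiewicz path. Then for every n ∈ {0, 1, ..., p - 1}, h_t(n) = #{ j ∈ {0, 1, ..., n-1} : x_j = min_{j ≤ ℓ ≤ n} x_ℓ }. -/
/-!
The number of vertices `v` with `parent v < a < v`, the pending vertices at `a`, is the value of
the Lukasiewicz path at `a`: summing `k_u` over `u < a` counts the vertices whose parent precedes
`a`, and removing the non-root vertices `v ≤ a`, which are as many as the `u < a`, leaves the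
pending ones.
Pending vertices accumulate as long as one stays in the subtree of `a`, while one of them has been
visited by the time one leaves it. Hence `a` satisfies the minimum condition with respect to a later
vertex `c` if and only if `a` is an ancestor of `c`, and `c` has `|c|` proper ancestors.
-/

open Finset

section Lex

variable {α : Type*}

theorem append_lt_of_lt_of_not_prefix [LT α] {u w : List α} (h : u < w) (hw : ¬ u <+: w)
    (s : List α) : u ++ s < w := by
  change List.Lex (· < ·) u w at h
  induction h with
  | nil => exact absurd List.nil_prefix hw
  | cons _ ih => exact .cons (ih fun hp => hw (List.cons_prefix_cons.2 ⟨rfl, hp⟩))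
  | rel hab => exact .rel hab

variable [LinearOrder α] {u v w : List α}

theorem le_of_prefix (h : u <+: v) : u ≤ v :=
  not_lt.1 h.le

theorem prefix_of_le_of_le_of_prefix (huw : u ≤ w) (hwv : w ≤ v) (huv : u <+: v) : u <+: w := by
  obtain ⟨s, rfl⟩ := huv
  by_contra hw
  have huw' : u < w := huw.lt_of_ne fun h => hw (h ▸ List.prefix_rfl)
  exact (append_lt_of_lt_of_not_prefix huw' hw s).not_ge hwv

theorem dropLast_lt (hv : v ≠ []) : v.dropLast < v := by
  have hlen : 0 < v.length := List.length_pos_of_ne_nil hv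
  exact (le_of_prefix v.dropLast_prefix).lt_of_ne (by grind)

theorem le_dropLast_of_prefix_of_lt (h : u <+: v) (hlt : u < v) : u ≤ v.dropLast := by
  have hlen : u.length < v.length :=
    h.length_le.lt_of_ne fun hlen => hlt.ne (h.eq_of_length hlen)
  exact le_of_prefix (List.prefix_of_prefix_length_le h v.dropLast_prefix (by grind))

end Lex

section Enumeration

variable {β : Type*} [LinearOrder β] {s : Finset β} {d : β} {n : ℕ}

theorem strictMonoOn_getD_sort : StrictMonoOn (fun i => s.sort.getD i d) (Set.Iio #s) := by
  intro i hi j hj hij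
  have hi' : i < s.sort.length := by simpa using hi
  have hj' : j < s.sort.length := by simpa using hj
  simpa only [List.getD_eq_getElem _ _ hi', List.getD_eq_getElem _ _ hj'] using
    s.sortedLT_sort.getElem_lt_getElem_of_lt hij

theorem getD_sort_mem (hn : n < #s) : s.sort.getD n d ∈ s := by
  have hn' : n < s.sort.length := by simpa using hn
  rw [List.getD_eq_getElem _ _ hn', ← mem_sort (· ≤ ·)]
  exact List.getElem_mem hn'

theorem exists_getD_sort_eq (d : β) {b : β} (hb : b ∈ s) : ∃ n < #s, s.sort.getD n d = b := by
  obtain ⟨n, hn, rfl⟩ := List.mem_iff_getElem.1 ((mem_sort (· ≤ ·)).2 hb)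
  exact ⟨n, by simpa using hn, List.getD_eq_getElem _ _ hn⟩

theorem image_getD_sort_range (hn : n < #s) :
    (range n).image (fun i => s.sort.getD i d) = {b ∈ s | b < s.sort.getD n d} := by
  ext b
  simp only [mem_image, mem_range, mem_filter]
  constructor
  · rintro ⟨i, hi, rfl⟩
    exact ⟨getD_sort_mem (hi.trans hn), strictMonoOn_getD_sort (hi.trans hn) hn hi⟩
  · rintro ⟨hb, hbn⟩
    obtain ⟨i, hi, rfl⟩ := exists_getD_sort_eq d hb
    exact ⟨i, (strictMonoOn_getD_sort.lt_iff_lt hi hn).1 hbn, rfl⟩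

theorem sum_range_getD_sort {M : Type*} [AddCommMonoid M] (hn : n < #s) (g : β → M) :
    ∑ i ∈ range n, g (s.sort.getD i d) = ∑ b ∈ s with b < s.sort.getD n d, g b := by
  rw [← image_getD_sort_range hn, sum_image]
  refine strictMonoOn_getD_sort.injOn.mono fun i hi => ?_
  exact (mem_range.1 hi).trans hn

theorem card_filter_range_getD_sort (hn : n < #s) (P : β → Prop) [DecidablePred P] :
    #{i ∈ range n | P (s.sort.getD i d)} = #{b ∈ s | b < s.sort.getD n d ∧ P b} := by
  rw [card_filter, sum_range_getD_sort hn fun b => if P b then 1 else 0, ← card_filter,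
    filter_filter]

theorem forall_mem_Icc_getD_sort {i : ℕ} (hi : i < #s) (hn : n < #s) {P : β → Prop} :
    (∀ j ∈ Icc i n, P (s.sort.getD j d)) ↔
      ∀ b ∈ s, s.sort.getD i d ≤ b → b ≤ s.sort.getD n d → P b := by
  constructor
  · intro h b hb hib hbn
    obtain ⟨j, hj, rfl⟩ := exists_getD_sort_eq d hb
    exact h j (mem_Icc.2 ⟨(strictMonoOn_getD_sort.le_iff_le hi hj).1 hib,
      (strictMonoOn_getD_sort.le_iff_le hj hn).1 hbn⟩)
  · intro h j hj
    obtain ⟨hij, hjn⟩ := mem_Icc.1 hj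
    have hj' : j < #s := hjn.trans_lt hn
    exact h _ (getD_sort_mem hj') (strictMonoOn_getD_sort.monotoneOn hi hj' hij)
      (strictMonoOn_getD_sort.monotoneOn hj' hn hjn)

end Enumeration

section Tree

variable {α : Type*} {t : Finset (List α)} {a c : List α}

theorem mem_of_prefix_of_mem (ht : (t : Set (List α)) ∈ Descriptive.tree α) (hac : a <+: c)
    (hc : c ∈ t) : a ∈ t :=
  Descriptive.Tree.mem_of_prefix (T := ⟨t, ht⟩) hac hc

variable [LinearOrder α]

theorem card_filter_lt_and_prefix (ht : (t : Set (List α)) ∈ Descriptive.tree α) (hc : c ∈ t) :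
    #{u ∈ t | u < c ∧ u <+: c} = c.length := by
  have himage : {u ∈ t | u < c ∧ u <+: c} = (range c.length).image c.take := by
    ext u
    simp only [mem_filter, mem_image, mem_range]
    constructor
    · rintro ⟨-, hlt, hp⟩
      exact ⟨u.length, hp.length_le.lt_of_ne fun h => hlt.ne (hp.eq_of_length h),
        (List.prefix_iff_eq_take.1 hp).symm⟩
    · rintro ⟨k, hk, rfl⟩
      have hp : c.take k <+: c := c.take_prefix k
      exact ⟨mem_of_prefix_of_mem ht hp hc, (le_of_prefix hp).lt_of_ne (by grind), hp⟩
  have hinj : Set.InjOn c.take (range c.length) := by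
    intro i hi j hj hij
    have hlen : (c.take i).length = (c.take j).length := congrArg List.length hij
    grind
  rw [himage, card_image_of_injOn hinj, card_range]

/-- The children of the vertex `u` in the tree `t`. -/
def children (t : Finset (List α)) (u : List α) : Finset (List α) :=
  {v ∈ t | v ≠ [] ∧ v.dropLast = u}

/-- The vertices pending at `a`, when `t` is explored in lexicographical order: those later than `a`
whose parent precedes `a`. The root is never pending, although `[].dropLast = []`. -/
def pending (t : Finset (List α)) (a : List α) : Finset (List α) :=
  {v ∈ t | v.dropLast < a ∧ a < v}

theorem sum_card_children (ht : (t : Set (List α)) ∈ Descriptive.tree α) (a : List α) :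
    ∑ u ∈ t with u < a, #(children t u) = #{v ∈ t | v ≠ [] ∧ v.dropLast < a} := by
  rw [card_eq_sum_card_fiberwise (f := List.dropLast) (t := {u ∈ t | u < a})]
  · refine sum_congr rfl fun u hu => congrArg card ?_
    grind [children]
  · intro v hv
    simp only [coe_filter, Set.mem_ofPred_eq] at hv ⊢
    exact ⟨mem_of_prefix_of_mem ht v.dropLast_prefix hv.1, hv.2.2⟩

theorem card_filter_dropLast_lt (hroot : [] ∈ t) (ha : a ∈ t) :
    #{v ∈ t | v ≠ [] ∧ v.dropLast < a} = #{v ∈ t | v < a} + #(pending t a) := by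
  have hle : #({v ∈ t | v ≤ a}.erase []) = #{v ∈ t | v < a} := by
    have herase : {v ∈ t | v ≤ a}.erase a = {v ∈ t | v < a} := by grind
    rw [← herase, card_erase_of_mem, card_erase_of_mem] <;> simp [ha, hroot, le_of_prefix]
  have hunion : {v ∈ t | v ≠ [] ∧ v.dropLast < a} = {v ∈ t | v ≤ a}.erase [] ∪ pending t a := by
    ext v
    grind [pending, dropLast_lt]
  have hdisj : Disjoint ({v ∈ t | v ≤ a}.erase []) (pending t a) := by
    rw [disjoint_left]
    grind [pending]
  rw [hunion, card_union_of_disjoint hdisj, hle]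

theorem sum_card_children_sub_one (ht : (t : Set (List α)) ∈ Descriptive.tree α) (ha : a ∈ t) :
    ∑ u ∈ t with u < a, ((#(children t u) : ℤ) - 1) = #(pending t a) := by
  have hroot : [] ∈ t := mem_of_prefix_of_mem ht List.nil_prefix ha
  have h := (sum_card_children ht a).trans (card_filter_dropLast_lt hroot ha)
  rw [sum_sub_distrib, ← Nat.cast_sum, h]
  simp

theorem pending_subset_of_prefix (h : a <+: c) : pending t a ⊆ pending t c := by
  intro v hv
  simp only [pending, mem_filter] at hv ⊢
  obtain ⟨hvt, hva, hav⟩ := hv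
  refine ⟨hvt, hva.trans_le (le_of_prefix h), lt_of_not_ge fun hvc => ?_⟩
  have hp : a <+: v := prefix_of_le_of_le_of_prefix hav.le hvc h
  exact (le_dropLast_of_prefix_of_lt hp hav).not_gt hva

theorem card_pending_lt_of_not_prefix (ht : (t : Set (List α)) ∈ Descriptive.tree α) (hc : c ∈ t)
    (hac : a < c) (h : ¬ a <+: c) (hfirst : ∀ w ∈ t, a ≤ w → w < c → a <+: w) :
    #(pending t c) < #(pending t a) := by
  have hmem_pending {v : List α} (hvt : v ∈ t) (hvc : v.dropLast < c) (hcv : c ≤ v) :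
      v ∈ pending t a := by
    rw [pending, mem_filter]
    refine ⟨hvt, lt_of_not_ge fun hav => h ?_, hac.trans_le hcv⟩
    have hpar : v.dropLast ∈ t := mem_of_prefix_of_mem ht v.dropLast_prefix hvt
    have hp : a <+: v := (hfirst _ hpar hav hvc).trans v.dropLast_prefix
    exact prefix_of_le_of_le_of_prefix hac.le hcv hp
  have hc0 : c ≠ [] := by rintro rfl; exact List.not_lt_nil _ hac
  refine card_lt_card ((ssubset_iff_of_subset fun v hv => ?_).2
    ⟨c, hmem_pending hc (dropLast_lt hc0) le_rfl, by simp [pending]⟩)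
  obtain ⟨hvt, hvc, hcv⟩ := mem_filter.1 hv
  exact hmem_pending hvt hvc hcv.le

theorem forall_card_pending_le_iff_prefix (ht : (t : Set (List α)) ∈ Descriptive.tree α)
    (hc : c ∈ t) (hac : a ≤ c) :
    (∀ w ∈ t, a ≤ w → w ≤ c → #(pending t a) ≤ #(pending t w)) ↔ a <+: c := by
  constructor
  · intro hmin
    by_contra hp
    have hne : {w ∈ t | a ≤ w ∧ ¬ a <+: w}.Nonempty := ⟨c, by simp [hc, hac, hp]⟩
    obtain ⟨b, hb, hbmin⟩ := exists_min_image _ id hne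
    simp only [mem_filter, id] at hb hbmin
    obtain ⟨hbt, hab, hpb⟩ := hb
    have hbc : b ≤ c := hbmin c ⟨hc, hac, hp⟩
    have hab' : a < b := hab.lt_of_ne fun h => hpb (h ▸ List.prefix_rfl)
    have hfirst : ∀ w ∈ t, a ≤ w → w < b → a <+: w := fun w hwt haw hwb =>
      not_not.1 fun hpw => (hbmin w ⟨hwt, haw, hpw⟩).not_gt hwb
    exact (card_pending_lt_of_not_prefix ht hbt hab' hpb hfirst).not_ge (hmin b hbt hab hbc)
  · intro hp w _ haw hwc
    exact card_le_card (pending_subset_of_prefix (prefix_of_le_of_le_of_prefix haw hwc hp))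

theorem stmt1_general (ht : (t : Set (List α)) ∈ Descriptive.tree α) {x : ℕ → ℤ}
    (hx : ∀ n, x n = ∑ i ∈ range n, ((#(children t (t.sort.getD i [])) : ℤ) - 1))
    {n : ℕ} (hn : n < #t) :
    (t.sort.getD n []).length = #{j ∈ range n | ∀ ℓ ∈ Icc j n, x j ≤ x ℓ} := by
  have hpend {m : ℕ} (hm : m < #t) : x m = #(pending t (t.sort.getD m [])) := by
    rw [hx, sum_range_getD_sort hm fun u => (#(children t u) : ℤ) - 1]
    -- `<` on `List α` carries two different decidability instances here.
    convert sum_card_children_sub_one ht (getD_sort_mem hm)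
  have hanc : ∀ j ∈ range n,
      ((∀ ℓ ∈ Icc j n, x j ≤ x ℓ) ↔ t.sort.getD j [] <+: t.sort.getD n []) := by
    intro j hj
    have hjn : j < n := mem_range.1 hj
    have hj' : j < #t := hjn.trans hn
    rw [← forall_card_pending_le_iff_prefix ht (getD_sort_mem hn)
        (strictMonoOn_getD_sort.monotoneOn hj' hn hjn.le), ← forall_mem_Icc_getD_sort hj' hn]
    refine forall₂_congr fun ℓ hℓ => ?_
    rw [hpend hj', hpend ((mem_Icc.1 hℓ).2.trans_lt hn), Nat.cast_le]
  calc (t.sort.getD n []).length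
      = #{u ∈ t | u < t.sort.getD n [] ∧ u <+: t.sort.getD n []} :=
        (card_filter_lt_and_prefix ht (getD_sort_mem hn)).symm
    _ = #{j ∈ range n | t.sort.getD j [] <+: t.sort.getD n []} := by
        convert (card_filter_range_getD_sort (d := []) hn (· <+: t.sort.getD n [])).symm
    _ = #{j ∈ range n | ∀ ℓ ∈ Icc j n, x j ≤ x ℓ} := by rw [filter_congr hanc]

end Tree

/-- Proposition 1.2: the height function `h_t(n) = |u_n|` of a plane tree `t` is related to its
Lukasiewicz path `x` (with `x_n = ∑_{i=1}^n (k_{u_{i-1}}(t) - 1)`) by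
`h_t(n) = #{j ∈ {0,…,n-1} : x_j = min_{j ≤ ℓ ≤ n} x_ℓ}` for every `n ∈ {0,…,#t-1}`. -/
theorem stmt1 (t : Finset (List ℕ)) (ht : IsPlaneTree t)
    (x : ℕ → ℤ)
    (hx : ∀ n : ℕ, x n =
      ∑ i ∈ Finset.range n, ((childCount t ((vertexList t).getD i []) : ℤ) - 1))
    (n : ℕ) (hn : n < t.card) :
    ((vertexList t).getD n []).length =
      ((Finset.range n).filter fun j => ∀ ℓ ∈ Finset.Icc j n, x j ≤ x ℓ).card :=
  stmt1_general (fun u a h => by simpa using ht.2.1 (u ++ [a]) h (by simp)) hx hn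
end

section
/- The quotient metric space (T_g, d_g) is a compact real tree: (i) for every a, b ∈ T_g there is a unique isometric map f_{a,b} from the interval [0, d_g(a,b)] into T_g such that f_{a,b}(0) = a and f_{a,b}(d_g(a,b)) = b; (ii) for every continuous injective map q : [0,1] → T_g with q(0) = a and q(1) = b, one has q([0,1]) = f_{a,b}([0, d_g(a,b)]). -/
/-!
A metric space is a real tree as soon as it is connected and satisfies the four-point condition.
Indeed, under the four-point condition the projection `y ↦ (b|y)_a` onto a virtual segment from `a`
to `b` is locally constant off that segment. Hence a connected set containing `a` and `b` cannot
miss a point of the segment, which gives both the existence of geodesics and the fact that they lie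
on every path.

For the space coded by `g`, the infimum of `g` over the interval between two points is an
ultrametric-type similarity, which yields the four-point condition; connectedness and compactness
are inherited from the domain of `g`.
-/

open Set Filter Topology

section FourPoint

/-- The four-point condition, or `0`-hyperbolicity in the sense of Gromov: among the three sums of
distances over the pairings of four points, the largest two are equal. -/
def IsZeroHyperbolic (X : Type*) [Dist X] : Prop :=
  ∀ x y z w : X, dist x y + dist z w ≤ max (dist x z + dist y w) (dist x w + dist y z)

variable {X : Type*} [PseudoMetricSpace X] {a b x y z : X}

/-- The Gromov product `(x|y)_o`. In a real tree, it is the distance from `o` to the geodesic from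
`x` to `y`, and also the distance from `o` to the projection of `y` onto the geodesic from `o`
to `x`. -/
noncomputable def gromovProduct (o x y : X) : ℝ := (dist o x + dist o y - dist x y) / 2

/-- The metric segment (interval) between two points: the points where the triangle inequality is
an equality. -/
def metricSegment (a b : X) : Set X := {x | dist a x + dist x b = dist a b}

theorem mem_metricSegment : x ∈ metricSegment a b ↔ dist a x + dist x b = dist a b := Iff.rfl

theorem left_mem_metricSegment (a b : X) : a ∈ metricSegment a b := by
  rw [mem_metricSegment, dist_self, zero_add]

theorem right_mem_metricSegment (a b : X) : b ∈ metricSegment a b := by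
  rw [mem_metricSegment, dist_self, add_zero]

theorem gromovProduct_comm (o x y : X) : gromovProduct o x y = gromovProduct o y x := by
  rw [gromovProduct, add_comm, dist_comm x y, gromovProduct]

theorem gromovProduct_nonneg (o x y : X) : 0 ≤ gromovProduct o x y := by
  have := dist_triangle_left x y o
  simp only [gromovProduct]
  linarith

theorem gromovProduct_self_right (o x : X) : gromovProduct o x o = 0 := by
  simp [gromovProduct, dist_comm]

theorem gromovProduct_self (o x : X) : gromovProduct o x x = dist o x := by
  simp [gromovProduct]

theorem gromovProduct_eq_zero_iff_mem_metricSegment :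
    gromovProduct x a b = 0 ↔ x ∈ metricSegment a b := by
  rw [gromovProduct, mem_metricSegment, dist_comm x a, div_eq_zero_iff, sub_eq_zero,
    or_iff_left two_ne_zero]

theorem gromovProduct_add_gromovProduct (a b y : X) :
    gromovProduct a b y + gromovProduct y a b = dist a y := by
  simp only [gromovProduct, dist_comm y a, dist_comm y b]
  ring

theorem dist_sub_gromovProduct (a b y : X) :
    dist a b - gromovProduct a b y = gromovProduct b a y := by
  simp only [gromovProduct, dist_comm b a]
  ring

theorem gromovProduct_le_dist (o x y : X) : gromovProduct o x y ≤ dist o x :=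
  sub_nonneg.1 (dist_sub_gromovProduct o x y ▸ gromovProduct_nonneg x o y)

@[fun_prop]
theorem continuous_gromovProduct_right (o x : X) : Continuous (gromovProduct o x) := by
  unfold gromovProduct
  fun_prop

namespace IsZeroHyperbolic

theorem gromovProduct_eq_of_dist_lt (hX : IsZeroHyperbolic X) (h : dist y z < gromovProduct y a b) :
    gromovProduct a b y = gromovProduct a b z := by
  have hy := le_max_iff.1 (hX a y b z)
  have hz := le_max_iff.1 (hX a z b y)
  have := dist_triangle a z y
  have := dist_triangle b z y
  simp only [gromovProduct, dist_comm y a, dist_comm y b, dist_comm z b, dist_comm z y] at *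
  rcases hy with hy | hy <;> rcases hz with hz | hz <;> linarith

theorem isOpen_setOf_gromovProduct_eq (hX : IsZeroHyperbolic X) (a b : X) (r : ℝ) :
    IsOpen {y | gromovProduct a b y = r ∧ 0 < gromovProduct y a b} := by
  refine Metric.isOpen_iff.2 fun y ⟨hyr, hy⟩ ↦ ⟨_, hy, fun z hz ↦ ?_⟩
  have hyz : dist y z < gromovProduct y a b := Metric.mem_ball'.1 hz
  have heq := hX.gromovProduct_eq_of_dist_lt hyz
  have hay := gromovProduct_add_gromovProduct a b y
  have haz := gromovProduct_add_gromovProduct a b z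
  have htri := dist_triangle_right a y z
  exact ⟨heq ▸ hyr, by linarith⟩

theorem exists_mem_metricSegment_dist_eq (hX : IsZeroHyperbolic X) {C : Set X}
    (hC : IsPreconnected C) (ha : a ∈ C) (hb : b ∈ C) {r : ℝ} (hr : r ∈ Icc 0 (dist a b)) :
    ∃ x ∈ C, x ∈ metricSegment a b ∧ dist a x = r := by
  by_contra! hne
  have hra : 0 ≠ r := dist_self a ▸ hne a ha (left_mem_metricSegment a b)
  have hrb : dist a b ≠ r := hne b hb (right_mem_metricSegment a b)
  have hpos : ∀ y ∈ C, gromovProduct a b y = r → 0 < gromovProduct y a b := fun y hy hyr ↦ by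
    refine (gromovProduct_nonneg y a b).lt_of_ne' fun h0 ↦ ?_
    refine hne y hy (gromovProduct_eq_zero_iff_mem_metricSegment.1 h0) ?_
    rw [← gromovProduct_add_gromovProduct a b y, hyr, h0, add_zero]
  let U := {y | gromovProduct a b y < r}
  let W := {y | gromovProduct a b y = r ∧ 0 < gromovProduct y a b}
  let V := {y | r < gromovProduct a b y} ∪ W
  have hU : IsOpen U := isOpen_lt (by fun_prop) continuous_const
  have hV : IsOpen V :=
    (isOpen_lt continuous_const (by fun_prop)).union (hX.isOpen_setOf_gromovProduct_eq a b r)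
  have hcover : C ⊆ U ∪ V := fun y hy ↦
    (lt_trichotomy (gromovProduct a b y) r).imp_right fun h ↦ h.symm.imp_right fun h ↦
      ⟨h, hpos y hy h⟩
  have haU : gromovProduct a b a < r := by
    simpa only [gromovProduct_self_right] using hr.1.lt_of_ne hra
  have hbV : r < gromovProduct a b b := by
    simpa only [gromovProduct_self] using hr.2.lt_of_ne' hrb
  obtain ⟨y, -, (hyU : _ < r), (hyV : r < _) | hyW⟩ :=
    hC U V hU hV hcover ⟨a, ha, haU⟩ ⟨b, hb, Or.inl hbV⟩
  · exact lt_asymm hyU hyV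
  · exact hyU.ne hyW.1

theorem dist_eq_abs_sub (hX : IsZeroHyperbolic X) (hx : x ∈ metricSegment a b)
    (hy : y ∈ metricSegment a b) : dist x y = |dist a x - dist a y| := by
  refine le_antisymm ?_ (by simpa only [dist_comm a] using abs_dist_sub_le x y a)
  rw [mem_metricSegment] at hx hy
  rcases le_max_iff.1 (hX a b x y) with h | h <;> rw [dist_comm b] at h
  · exact le_abs.2 (Or.inl (by linarith))
  · exact le_abs.2 (Or.inr (by linarith))

/-- The point produced is the center of the tripod spanned by `a`, `b` and `y`. -/
theorem exists_mem_metricSegment_inter (hX : IsZeroHyperbolic X) {C : Set X}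
    (hC : IsPreconnected C) (ha : a ∈ C) (hb : b ∈ C) (y : X) :
    ∃ z, z ∈ metricSegment a b ∧ z ∈ metricSegment a y ∧ z ∈ metricSegment y b := by
  obtain ⟨z, -, hz, haz⟩ := hX.exists_mem_metricSegment_dist_eq hC ha hb
    ⟨gromovProduct_nonneg a b y, gromovProduct_le_dist a b y⟩
  have hzb : dist z b = gromovProduct b a y := by
    rw [← dist_sub_gromovProduct, ← haz, ← mem_metricSegment.1 hz, add_sub_cancel_left]
  have hay := gromovProduct_add_gromovProduct a b y
  have hyb := gromovProduct_add_gromovProduct b a y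
  rw [gromovProduct_comm y b a, dist_comm b y] at hyb
  have hzy : dist z y ≤ gromovProduct y a b := by
    rcases le_max_iff.1 (hX a b z y) with h | h <;>
      linarith [mem_metricSegment.1 hz, dist_comm b z, dist_comm b y]
  refine ⟨z, hz, ?_, ?_⟩ <;> rw [mem_metricSegment]
  · linarith [dist_triangle a z y]
  · linarith [dist_triangle_left y b z, dist_comm y z]

end IsZeroHyperbolic

end FourPoint

section RealTree

variable {X : Type*} [MetricSpace X] {a b x y : X}

/-- A geodesic from `a` to `b`: an isometric map on `[0, dist a b]` with these endpoints. -/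
def IsGeodesic (a b : X) (f : Icc (0 : ℝ) (dist a b) → X) : Prop :=
  Isometry f ∧ f ⟨0, le_refl 0, dist_nonneg⟩ = a ∧ f ⟨dist a b, dist_nonneg, le_refl _⟩ = b

/-- Real trees: any two points are joined by a unique geodesic, and every arc joining them, i.e.
every injective path, has the same range as this geodesic. -/
def IsRealTree (X : Type*) [MetricSpace X] : Prop :=
  ∀ a b : X, (∃! f, IsGeodesic a b f) ∧
    ∀ f, IsGeodesic a b f → ∀ q : Icc (0 : ℝ) 1 → X, Continuous q → Function.Injective q →
      q ⟨0, le_refl 0, zero_le_one⟩ = a → q ⟨1, zero_le_one, le_refl 1⟩ = b → range q = range f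

namespace IsGeodesic

variable {f : Icc (0 : ℝ) (dist a b) → X}

theorem dist_left (hf : IsGeodesic a b f) (r : Icc (0 : ℝ) (dist a b)) : dist a (f r) = r := by
  conv_lhs => rw [← hf.2.1]
  rw [hf.1.dist_eq, Subtype.dist_eq, Real.dist_eq, zero_sub, abs_neg, abs_of_nonneg r.2.1]

theorem dist_right (hf : IsGeodesic a b f) (r : Icc (0 : ℝ) (dist a b)) :
    dist (f r) b = dist a b - r := by
  conv_lhs => rw [← hf.2.2]
  rw [hf.1.dist_eq, Subtype.dist_eq, dist_comm, Real.dist_eq, abs_of_nonneg (sub_nonneg.2 r.2.2)]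

protected theorem mem_metricSegment (hf : IsGeodesic a b f) (r : Icc (0 : ℝ) (dist a b)) :
    f r ∈ metricSegment a b := by
  rw [mem_metricSegment, hf.dist_left, hf.dist_right, add_sub_cancel]

end IsGeodesic

namespace IsZeroHyperbolic

theorem eq_of_mem_metricSegment (hX : IsZeroHyperbolic X) (hx : x ∈ metricSegment a b)
    (hy : y ∈ metricSegment a b) (h : dist a x = dist a y) : x = y := by
  rw [← dist_eq_zero, hX.dist_eq_abs_sub hx hy, h, sub_self, abs_zero]

theorem metricSegment_subset_of_isPreconnected (hX : IsZeroHyperbolic X) {C : Set X}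
    (hC : IsPreconnected C) (ha : a ∈ C) (hb : b ∈ C) : metricSegment a b ⊆ C := by
  intro x hx
  obtain ⟨y, hyC, hy, hxy⟩ := hX.exists_mem_metricSegment_dist_eq hC ha hb (r := dist a x)
    ⟨dist_nonneg, mem_metricSegment.1 hx ▸ le_add_of_nonneg_right dist_nonneg⟩
  rwa [hX.eq_of_mem_metricSegment hx hy hxy.symm]

theorem range_eq_metricSegment_of_isGeodesic (hX : IsZeroHyperbolic X)
    {f : Icc (0 : ℝ) (dist a b) → X} (hf : IsGeodesic a b f) : range f = metricSegment a b := by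
  refine (range_subset_iff.2 hf.mem_metricSegment).antisymm ?_
  have : PreconnectedSpace (Icc (0 : ℝ) (dist a b)) :=
    isPreconnected_iff_preconnectedSpace.1 isPreconnected_Icc
  exact hX.metricSegment_subset_of_isPreconnected (isPreconnected_range hf.1.continuous)
    ⟨_, hf.2.1⟩ ⟨_, hf.2.2⟩

theorem image_Icc_eq_metricSegment (hX : IsZeroHyperbolic X) {ι : Type*}
    [ConditionallyCompleteLinearOrder ι] [DenselyOrdered ι] [TopologicalSpace ι] [OrderTopology ι]
    {γ : ι → X} {u v : ι} (huv : u ≤ v) (hγ : ContinuousOn γ (Icc u v))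
    (hinj : InjOn γ (Icc u v)) : γ '' Icc u v = metricSegment (γ u) (γ v) := by
  have hu : u ∈ Icc u v := left_mem_Icc.2 huv
  have hv : v ∈ Icc u v := right_mem_Icc.2 huv
  have hpre : ∀ s ∈ Icc u v, ∀ t ∈ Icc u v, IsPreconnected (γ '' Icc s t) := fun s hs t ht ↦
    isPreconnected_Icc.image _ (hγ.mono (Icc_subset_Icc hs.1 ht.2))
  refine Subset.antisymm ?_ (hX.metricSegment_subset_of_isPreconnected (hpre u hu v hv)
    (mem_image_of_mem γ hu) (mem_image_of_mem γ hv))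
  rintro _ ⟨t, ht, rfl⟩
  -- `γ` visits the center `z` of the tripod both before and after time `t`, so `γ t = z`.
  obtain ⟨z, hz, hzu, hzv⟩ := hX.exists_mem_metricSegment_inter (hpre u hu v hv)
    (mem_image_of_mem γ hu) (mem_image_of_mem γ hv) (γ t)
  obtain ⟨s, hs, rfl⟩ : z ∈ γ '' Icc u t :=
    hX.metricSegment_subset_of_isPreconnected (hpre u hu t ht)
      (mem_image_of_mem γ (left_mem_Icc.2 ht.1)) (mem_image_of_mem γ (right_mem_Icc.2 ht.1)) hzu
  obtain ⟨s', hs', hss'⟩ : γ s ∈ γ '' Icc t v :=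
    hX.metricSegment_subset_of_isPreconnected (hpre t ht v hv)
      (mem_image_of_mem γ (left_mem_Icc.2 ht.2)) (mem_image_of_mem γ (right_mem_Icc.2 ht.2)) hzv
  have hss : s' = s := hinj ⟨ht.1.trans hs'.1, hs'.2⟩ ⟨hs.1, hs.2.trans ht.2⟩ hss'
  rwa [← hs.2.antisymm (hss ▸ hs'.1)]

theorem exists_isGeodesic [PreconnectedSpace X] (hX : IsZeroHyperbolic X) (a b : X) :
    ∃ f, IsGeodesic a b f := by
  choose f hmem hdist using fun r : Icc (0 : ℝ) (dist a b) ↦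
    (hX.exists_mem_metricSegment_dist_eq isPreconnected_univ (mem_univ a) (mem_univ b) r.2).imp
      fun _ ↦ And.right
  refine ⟨f, Isometry.of_dist_eq fun r s ↦ ?_, ?_, ?_⟩
  · rw [hX.dist_eq_abs_sub (hmem r) (hmem s), hdist, hdist, Subtype.dist_eq, Real.dist_eq]
  · exact hX.eq_of_mem_metricSegment (hmem _) (left_mem_metricSegment a b) (by simp [hdist])
  · exact hX.eq_of_mem_metricSegment (hmem _) (right_mem_metricSegment a b) (hdist _)

theorem isRealTree [PreconnectedSpace X] (hX : IsZeroHyperbolic X) : IsRealTree X := by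
  refine fun a b ↦ ⟨existsUnique_of_exists_of_unique (hX.exists_isGeodesic a b) ?_, ?_⟩
  · refine fun f f' hf hf' ↦ funext fun r ↦ ?_
    exact hX.eq_of_mem_metricSegment (hf.mem_metricSegment r) (hf'.mem_metricSegment r)
      ((hf.dist_left r).trans (hf'.dist_left r).symm)
  · rintro f hf q hq hinj rfl rfl
    have harc := hX.image_Icc_eq_metricSegment (bot_le (a := (⊤ : Icc (0 : ℝ) 1)))
      hq.continuousOn hinj.injOn
    rw [Icc_bot_top, image_univ] at harc
    exact harc.trans (hX.range_eq_metricSegment_of_isGeodesic hf).symm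

end IsZeroHyperbolic

end RealTree

section IntervalInf

/-- The infimum `m_g(s, t)` of `g` over the interval between `s` and `t`. -/
noncomputable def intervalInf {α β : Type*} [Lattice α] [InfSet β] (g : α → β) (s t : α) : β :=
  sInf (g '' uIcc s t)

variable {α β : Type*} [LinearOrder α] [ConditionallyCompleteLinearOrder β] {g : α → β}

theorem intervalInf_comm (g : α → β) (s t : α) : intervalInf g s t = intervalInf g t s := by
  rw [intervalInf, uIcc_comm, intervalInf]

theorem le_intervalInf {s t : α} {c : β} (h : ∀ r ∈ uIcc s t, c ≤ g r) : c ≤ intervalInf g s t :=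
  le_csInf (nonempty_uIcc.image g) (forall_mem_image.2 h)

theorem min_intervalInf_le (hg : ∀ s t, BddBelow (g '' uIcc s t)) (s t u : α) :
    min (intervalInf g s t) (intervalInf g t u) ≤ intervalInf g s u := by
  refine le_intervalInf fun r hr ↦ ?_
  rcases uIcc_subset_uIcc_union_uIcc (b := t) hr with h | h
  · exact min_le_of_left_le (csInf_le (hg s t) (mem_image_of_mem g h))
  · exact min_le_of_right_le (csInf_le (hg t u) (mem_image_of_mem g h))

end IntervalInf

section UltrametricSimilarity

variable {X R : Type*} [AddCommMonoid R] [LinearOrder R] [IsOrderedAddMonoid R] {m : X → X → R}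

theorem add_le_add_of_max_le (hcomm : ∀ x y, m x y = m y x)
    (hultra : ∀ x y z, min (m x y) (m y z) ≤ m x z) (x y z w : X)
    (h : max (m x w) (m y z) ≤ m x z) : m x w + m y z ≤ m x y + m z w := by
  obtain ⟨hxw, hyz⟩ := max_le_iff.1 h
  have hxy : m y z ≤ m x y := by simpa only [hcomm z y, min_eq_right hyz] using hultra x z y
  have hzw : m x w ≤ m z w := by simpa only [hcomm z x, min_eq_right hxw] using hultra z x w
  simpa only [add_comm (m x w)] using add_le_add hxy hzw

theorem min_add_le_add_of_min_le (hcomm : ∀ x y, m x y = m y x)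
    (hultra : ∀ x y z, min (m x y) (m y z) ≤ m x z) (x y z w : X) :
    min (m x z + m y w) (m x w + m y z) ≤ m x y + m z w := by
  have key := add_le_add_of_max_le hcomm hultra
  -- The four cases are permuted by the symmetries `x ↔ y` and `z ↔ w`.
  rcases le_total (max (m x w) (m y z)) (max (m x z) (m y w)) with h | h
  · refine min_le_of_right_le ?_
    rcases le_max_iff.1 h with hxz | hyw
    · exact key x y z w hxz
    · simpa only [hcomm y x, hcomm w z, add_comm (m y z)] using
        key y x w z ((max_comm _ _).trans_le hyw)
  · refine min_le_of_left_le ?_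
    rcases le_max_iff.1 h with hxw | hyz
    · simpa only [hcomm w z] using key x y w z hxw
    · simpa only [hcomm y x, add_comm (m y w)] using
        key y x z w ((max_comm _ _).trans_le hyz)

end UltrametricSimilarity

/-- `p` pulls back the distance of `T` to the pseudometric `d_g` coded by `g`. When `p` is moreover
surjective, `p` identifies `T` with the metric quotient `T_g`. -/
def IsTreeCoding {α T : Type*} [Lattice α] [Dist T] (g : α → ℝ) (p : α → T) : Prop :=
  ∀ s t, dist (p s) (p t) = g s + g t - 2 * intervalInf g s t

namespace IsTreeCoding

section PseudoMetric

variable {α T : Type*} [LinearOrder α] [PseudoMetricSpace T] {g : α → ℝ} {p : α → T}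

theorem isZeroHyperbolic (h : IsTreeCoding g p) (hg : ∀ s t, BddBelow (g '' uIcc s t))
    (hp : p.Surjective) : IsZeroHyperbolic T := by
  refine hp.forall.2 fun x ↦ hp.forall.2 fun y ↦ hp.forall.2 fun z ↦ hp.forall.2 fun w ↦ ?_
  have := min_add_le_add_of_min_le (intervalInf_comm g) (min_intervalInf_le hg) x y z w
  simp only [h _ _, le_max_iff]
  rcases min_le_iff.1 this with hm | hm
  · exact Or.inl (by linarith)
  · exact Or.inr (by linarith)

theorem continuous [TopologicalSpace α] [OrderTopology α] (h : IsTreeCoding g p)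
    (hg : Continuous g) : Continuous p := by
  refine continuous_iff_continuousAt.2 fun s ↦ Metric.tendsto_nhds.2 fun ε hε ↦ ?_
  have hnear : ∀ᶠ t in 𝓝 s, dist (g t) (g s) < ε / 4 :=
    Metric.tendsto_nhds.1 hg.continuousAt _ (by positivity)
  have huIcc : ∀ᶠ t in 𝓝 s, ∀ r ∈ uIcc t s, dist (g r) (g s) < ε / 4 :=
    (tendsto_id.uIcc tendsto_const_nhds).eventually hnear.smallSets
  filter_upwards [huIcc] with t ht
  have hinf : g s - ε / 4 ≤ intervalInf g t s := le_intervalInf fun r hr ↦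
    (sub_lt_of_abs_sub_lt_left (ht r hr)).le
  have hgt : g t - g s < ε / 4 := (le_abs_self _).trans_lt (ht t left_mem_uIcc)
  rw [h t s]
  linarith

end PseudoMetric

variable {α T : Type*} [MetricSpace T] {g : α → ℝ} {p : α → T}

theorem subsingleton_image [LinearOrder α] (h : IsTreeCoding g p) {A : Set α} (hA : A.OrdConnected)
    {c : ℝ} (hgA : ∀ s ∈ A, g s = c) : (p '' A).Subsingleton := by
  rintro _ ⟨s, hs, rfl⟩ _ ⟨t, ht, rfl⟩
  have hc : c ≤ intervalInf g s t := le_intervalInf fun r hr ↦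
    (hgA r (hA.uIcc_subset hs ht hr)).ge
  refine dist_le_zero.1 ?_
  rw [h s t, hgA s hs, hgA t ht]
  linarith

variable [ConditionallyCompleteLinearOrder α] [TopologicalSpace α] [OrderTopology α]

theorem compactSpace (h : IsTreeCoding g p) (hg : Continuous g) (hsupp : HasCompactSupport g)
    (hp : p.Surjective) : CompactSpace T := by
  have : Nonempty α := ⟨sSup ∅⟩
  obtain ⟨a, ha⟩ := hsupp.isCompact.bddBelow
  obtain ⟨b, hb⟩ := hsupp.isCompact.bddAbove
  have hleft : ∀ s ∈ Iio a, g s = 0 := fun s hs ↦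
    image_eq_zero_of_notMem_tsupport fun hs' ↦ (ha hs').not_gt hs
  have hright : ∀ s ∈ Ioi b, g s = 0 := fun s hs ↦
    image_eq_zero_of_notMem_tsupport fun hs' ↦ (hb hs').not_gt hs
  have hcover : Iio a ∪ Icc a b ∪ Ioi b = univ := eq_univ_of_forall fun s ↦ by
    simp only [mem_union, mem_Iio, mem_Icc, mem_Ioi]
    grind
  refine ⟨?_⟩
  rw [← hp.range_eq, ← image_univ, ← hcover, image_union, image_union]
  exact ((h.subsingleton_image ordConnected_Iio hleft).isCompact.union
    (isCompact_Icc.image (h.continuous hg))).union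
      (h.subsingleton_image ordConnected_Ioi hright).isCompact

theorem isRealTree [DenselyOrdered α] (h : IsTreeCoding g p) (hg : Continuous g)
    (hp : p.Surjective) : IsRealTree T := by
  have hbdd : ∀ s t, BddBelow (g '' uIcc s t) := fun _ _ ↦
    isCompact_uIcc.bddBelow_image hg.continuousOn
  have : PreconnectedSpace T :=
    ⟨hp.range_eq ▸ isPreconnected_range (h.continuous hg)⟩
  exact (h.isZeroHyperbolic hbdd hp).isRealTree

end IsTreeCoding

theorem stmt13_general {α T : Type*} [ConditionallyCompleteLinearOrder α] [DenselyOrdered α]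
    [TopologicalSpace α] [OrderTopology α] [MetricSpace T] {g : α → ℝ} (hg : Continuous g)
    (hsupp : HasCompactSupport g) {p : α → T} (hp : p.Surjective) (h : IsTreeCoding g p) :
    CompactSpace T ∧ IsRealTree T :=
  ⟨h.compactSpace hg hsupp hp, h.isRealTree hg hp⟩

/-- Theorem 2.2: the metric space `T_g` coded by a continuous nonnegative function `g` with
compact support and `g(0) = 0` (not identically zero) is a compact real tree. Here `T_g` is
axiomatized as a metric space `T` together with a surjection `p : ℝ → T` (the canonical
projection, with `g` extended by `0` to the negative half-line) satisfying
`dist (p s) (p t) = g(s) + g(t) - 2 m_g(s,t)`, where `m_g(s,t) = inf_{[s∧t, s∨t]} g`. -/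
theorem stmt13 (g : ℝ → ℝ) (hg_cont : Continuous g) (hg_nonneg : ∀ x, 0 ≤ g x)
    (hg_neg : ∀ x ≤ (0 : ℝ), g x = 0) (hg_supp : HasCompactSupport g) (hg_ne : g ≠ 0)
    (T : Type) [MetricSpace T] (p : ℝ → T) (hp_surj : Function.Surjective p)
    (hp_dist : ∀ s t : ℝ,
      dist (p s) (p t) = g s + g t - 2 * sInf (g '' Set.Icc (min s t) (max s t))) :
    CompactSpace T ∧
    ∀ a b : T,
      (∃! f : Set.Icc (0 : ℝ) (dist a b) → T,
        Isometry f ∧ f ⟨0, le_refl 0, dist_nonneg⟩ = a ∧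
          f ⟨dist a b, dist_nonneg, le_refl _⟩ = b) ∧
      (∀ f : Set.Icc (0 : ℝ) (dist a b) → T,
        Isometry f → f ⟨0, le_refl 0, dist_nonneg⟩ = a →
          f ⟨dist a b, dist_nonneg, le_refl _⟩ = b →
        ∀ q : Set.Icc (0 : ℝ) 1 → T, Continuous q → Function.Injective q →
          q ⟨0, le_refl 0, zero_le_one⟩ = a → q ⟨1, zero_le_one, le_refl 1⟩ = b →
          Set.range q = Set.range f) := by
  obtain ⟨hcompact, htree⟩ := stmt13_general hg_cont hg_supp hp_surj hp_dist
  exact ⟨hcompact, fun a b ↦ ⟨(htree a b).1, fun f hf h0 h1 ↦ (htree a b).2 f ⟨hf, h0, h1⟩⟩⟩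
end

section
/- The set R = { (p_g(t), p_{g'}(t)) : t ≥ 0 } is a correspondence between T_g and T_{g'} (every point of T_g is related to at least one point of T_{g'} and vice versa) containing the pair of roots (p_g(0), p_{g'}(0)), and its distortion satisfies dis(R) = sup{ |d_g(σ, η) - d_{g'}(σ', η')| : (σ, σ') ∈ R, (η, η') ∈ R } ≤ 4 ‖g - g'‖_∞, where ‖g - g'‖_∞ = sup_{t ≥ 0} |g(t) - g'(t)|. Consequently, the Gromov–Hausdorff distance between the compact metric spaces T_g and T_{g'} is at most 2 ‖g - g'‖_∞. -/
/-!
Replacing `g` by `g'` changes each of the two values `g s`, `g t` and the infimum of `g` between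
`s` and `t` by at most `‖g - g'‖_∞`, and the infimum is counted twice in the tree distance; hence
the factor `4`. A correspondence of distortion at most `c` lets one glue the two spaces along it,
related points being put at distance `ε > c / 2`. The glued distance satisfies the triangle
inequality and the spaces lie within Hausdorff distance `ε` of each other, so their
Gromov–Hausdorff distance is at most `c / 2`.
-/

open Set GromovHausdorff

section Infimum

variable {α β : Type*}

theorem sInf_image_le_sInf_image_add [ConditionallyCompleteLattice α] [AddGroup α] [AddRightMono α]
    {f g : β → α} {s : Set β} {c : α} (hs : s.Nonempty) (hf : BddBelow (f '' s))
    (h : ∀ x ∈ s, f x ≤ g x + c) : sInf (f '' s) ≤ sInf (g '' s) + c := by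
  rw [← sub_le_iff_le_add]
  refine le_csInf (hs.image g) (forall_mem_image.2 fun x hx => ?_)
  exact sub_le_iff_le_add.2 ((csInf_le hf (mem_image_of_mem f hx)).trans (h x hx))

theorem abs_sInf_image_sub_sInf_image_le [ConditionallyCompleteLinearOrder α] [AddCommGroup α]
    [IsOrderedAddMonoid α] {f g : β → α} {s : Set β} {c : α} (hs : s.Nonempty)
    (hf : BddBelow (f '' s)) (h : ∀ x ∈ s, |f x - g x| ≤ c) :
    |sInf (f '' s) - sInf (g '' s)| ≤ c := by
  have hfg : ∀ x ∈ s, f x ≤ g x + c := fun x hx =>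
    sub_le_iff_le_add'.1 (abs_sub_le_iff.1 (h x hx)).1
  have hgf : ∀ x ∈ s, g x ≤ f x + c := fun x hx =>
    sub_le_iff_le_add'.1 (abs_sub_le_iff.1 (h x hx)).2
  have hg : BddBelow (g '' s) := by
    obtain ⟨m, hm⟩ := hf
    refine ⟨m - c, forall_mem_image.2 fun x hx => sub_le_iff_le_add.2 ?_⟩
    exact (hm (mem_image_of_mem f hx)).trans (hfg x hx)
  exact abs_sub_le_iff.2 ⟨sub_le_iff_le_add'.2 (sInf_image_le_sInf_image_add hs hf hfg),
    sub_le_iff_le_add'.2 (sInf_image_le_sInf_image_add hs hg hgf)⟩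

end Infimum

section Correspondence

variable {X Y : Type*} {R : Set (X × Y)} {c : ℝ}

/-- A correspondence between `X` and `Y`: a relation under which every point of either space is
related to some point of the other. -/
def IsCorrespondence (R : Set (X × Y)) : Prop :=
  (∀ x, ∃ y, (x, y) ∈ R) ∧ ∀ y, ∃ x, (x, y) ∈ R

/-- The distortion of the relation `R` between metric spaces is at most `c`. Bounding the
differences directly, instead of their supremum, avoids the junk value of `sSup` on unbounded
sets. -/
def HasDistortionLE [Dist X] [Dist Y] (R : Set (X × Y)) (c : ℝ) : Prop :=
  ∀ (x₁ x₂ : X) (y₁ y₂ : Y), (x₁, y₁) ∈ R → (x₂, y₂) ∈ R → |dist x₁ x₂ - dist y₁ y₂| ≤ c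

theorem isCorrespondence_range_prodMk {ι : Type*} {p : ι → X} {q : ι → Y}
    (hp : p.Surjective) (hq : q.Surjective) : IsCorrespondence (range fun i => (p i, q i)) :=
  ⟨hp.forall.2 fun i => ⟨q i, i, rfl⟩, hq.forall.2 fun i => ⟨p i, i, rfl⟩⟩

theorem HasDistortionLE.nonneg [Dist X] [Dist Y] (h : HasDistortionLE R c) (hR : R.Nonempty) :
    0 ≤ c := by
  obtain ⟨⟨x, y⟩, hxy⟩ := hR
  exact (abs_nonneg _).trans (h x x y y hxy hxy)

variable [MetricSpace X] [CompactSpace X] [Nonempty X] [MetricSpace Y] [CompactSpace Y] [Nonempty Y]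

theorem IsCorrespondence.ghDist_le_of_hasDistortionLE_of_lt (hR : IsCorrespondence R)
    (h : HasDistortionLE R c) {ε : ℝ} (hc : c / 2 < ε) : ghDist X Y ≤ ε := by
  have hne : R.Nonempty := (hR.1 (Classical.arbitrary X)).imp' (Prod.mk _) fun _ => id
  have : Nonempty R := hne.to_subtype
  have hε : 0 < ε := (div_nonneg (h.nonneg hne) zero_le_two).trans_lt hc
  let fst : R → X := fun r => r.1.1
  let snd : R → Y := fun r => r.1.2
  have hdist : ∀ r r' : R, |dist (fst r) (fst r') - dist (snd r) (snd r')| ≤ 2 * ε := fun r r' =>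
    (h _ _ _ _ r.2 r'.2).trans (by linarith)
  let _ : MetricSpace (X ⊕ Y) := Metric.glueMetricApprox fst snd ε hε hdist
  have hinl : Isometry (Sum.inl : X → X ⊕ Y) := Isometry.of_dist_eq fun _ _ => rfl
  have hinr : Isometry (Sum.inr : Y → X ⊕ Y) := Isometry.of_dist_eq fun _ _ => rfl
  have hglued : ∀ x y, (x, y) ∈ R → dist (Sum.inl x : X ⊕ Y) (Sum.inr y) = ε := fun x y hxy =>
    Metric.glueDist_glued_points fst snd ε ⟨(x, y), hxy⟩
  refine (ghDist_le_hausdorffDist hinl hinr).trans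
    (Metric.hausdorffDist_le_of_mem_dist hε.le ?_ ?_)
  · rintro _ ⟨x, rfl⟩
    obtain ⟨y, hxy⟩ := hR.1 x
    exact ⟨Sum.inr y, mem_range_self y, (hglued x y hxy).le⟩
  · rintro _ ⟨y, rfl⟩
    obtain ⟨x, hxy⟩ := hR.2 y
    exact ⟨Sum.inl x, mem_range_self x, (dist_comm _ _).trans_le (hglued x y hxy).le⟩

theorem IsCorrespondence.ghDist_le_of_hasDistortionLE (hR : IsCorrespondence R)
    (h : HasDistortionLE R c) : ghDist X Y ≤ c / 2 :=
  le_of_forall_gt_imp_ge_of_dense fun _ hε => hR.ghDist_le_of_hasDistortionLE_of_lt h hε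

end Correspondence

section CodedTree

variable {ι : Type*} [Lattice ι] {g g' : ι → ℝ}

/-- The pseudodistance `d_g(s, t) = g(s) + g(t) - 2 m_g(s, t)` coded by `g`. The unordered interval
`uIcc s t` plays the role of `[s ∧ t, s ∨ t]`. -/
noncomputable def treeDist (g : ι → ℝ) (s t : ι) : ℝ :=
  g s + g t - 2 * sInf (g '' uIcc s t)

/-- The map `p` realizes `T` as the tree `T_g` coded by `g`, that is, as the metric quotient of `ι`
by the pseudodistance `treeDist g` with `p` as canonical projection. -/
structure IsCodedTree {T : Type*} [Dist T] (g : ι → ℝ) (p : ι → T) : Prop where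
  surjective : p.Surjective
  dist_eq : ∀ s t, dist (p s) (p t) = treeDist g s t

theorem abs_treeDist_sub_treeDist_le {M : ℝ} {s t : ι} (hg : BddBelow (g '' uIcc s t))
    (h : ∀ r ∈ uIcc s t, |g r - g' r| ≤ M) : |treeDist g s t - treeDist g' s t| ≤ 4 * M := by
  have hInf : |sInf (g '' uIcc s t) - sInf (g' '' uIcc s t)| ≤ M :=
    abs_sInf_image_sub_sInf_image_le nonempty_uIcc hg h
  calc |treeDist g s t - treeDist g' s t|
      = |(g s - g' s) + (g t - g' t) - 2 * (sInf (g '' uIcc s t) - sInf (g' '' uIcc s t))| := by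
        unfold treeDist
        ring_nf
    _ ≤ |g s - g' s| + |g t - g' t| + 2 * |sInf (g '' uIcc s t) - sInf (g' '' uIcc s t)| := by
        grw [abs_sub, abs_add_le, abs_mul, abs_two]
    _ ≤ 4 * M := by linarith [h s left_mem_uIcc, h t right_mem_uIcc]

theorem IsCodedTree.hasDistortionLE {T T' : Type*} [Dist T] [Dist T'] {p : ι → T} {p' : ι → T'}
    {M : ℝ} (hp : IsCodedTree g p) (hp' : IsCodedTree g' p')
    (hg : ∀ s t, BddBelow (g '' uIcc s t)) (h : ∀ t, |g t - g' t| ≤ M) :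
    HasDistortionLE (range fun t => (p t, p' t)) (4 * M) := by
  rintro _ _ _ _ ⟨s, hs⟩ ⟨t, ht⟩
  obtain ⟨rfl, rfl⟩ := Prod.mk.inj hs
  obtain ⟨rfl, rfl⟩ := Prod.mk.inj ht
  rw [hp.dist_eq, hp'.dist_eq]
  exact abs_treeDist_sub_treeDist_le (hg s t) fun r _ => h r

theorem stmt15_general {T T' : Type*} [MetricSpace T] [CompactSpace T] [Nonempty T]
    [MetricSpace T'] [CompactSpace T'] [Nonempty T'] {p : ι → T} {p' : ι → T'}
    (hp : IsCodedTree g p) (hp' : IsCodedTree g' p') (hg : ∀ s t, BddBelow (g '' uIcc s t))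
    (hgg' : BddAbove (range fun t => |g t - g' t|)) :
    IsCorrespondence (range fun t => (p t, p' t)) ∧
    HasDistortionLE (range fun t => (p t, p' t)) (4 * ⨆ t, |g t - g' t|) ∧
    ghDist T T' ≤ 2 * ⨆ t, |g t - g' t| := by
  have hcorr := isCorrespondence_range_prodMk hp.surjective hp'.surjective
  have hdis := hp.hasDistortionLE hp' hg (le_ciSup hgg')
  exact ⟨hcorr, hdis, (hcorr.ghDist_le_of_hasDistortionLE hdis).trans_eq (by ring)⟩

end CodedTree

/-- Lemma 2.4: let `g, g'` be two coding functions and `(T, p)`, `(T', p')` metric-space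
realizations of the coded trees `T_g`, `T_{g'}`. Then
`R = {(p_g(t), p_{g'}(t)) : t ≥ 0}` is a correspondence between `T_g` and `T_{g'}` containing
the pair of roots, its distortion is at most `4‖g - g'‖_∞`, and consequently
`d_{GH}(T_g, T_{g'}) ≤ 2‖g - g'‖_∞`. -/
theorem stmt15 (g g' : ℝ → ℝ)
    (hg_cont : Continuous g) (hg_nonneg : ∀ x, 0 ≤ g x)
    (hg_neg : ∀ x ≤ (0 : ℝ), g x = 0) (hg_supp : HasCompactSupport g) (hg_ne : g ≠ 0)
    (hg'_cont : Continuous g') (hg'_nonneg : ∀ x, 0 ≤ g' x)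
    (hg'_neg : ∀ x ≤ (0 : ℝ), g' x = 0) (hg'_supp : HasCompactSupport g') (hg'_ne : g' ≠ 0)
    (T T' : Type) [MetricSpace T] [MetricSpace T']
    [CompactSpace T] [CompactSpace T'] [Nonempty T] [Nonempty T']
    (p : ℝ → T) (p' : ℝ → T')
    (hp_surj : Function.Surjective p) (hp'_surj : Function.Surjective p')
    (hp_dist : ∀ s t : ℝ, dist (p s) (p t) =
      g s + g t - 2 * sInf (g '' Set.Icc (min s t) (max s t)))
    (hp'_dist : ∀ s t : ℝ, dist (p' s) (p' t) =
      g' s + g' t - 2 * sInf (g' '' Set.Icc (min s t) (max s t)))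
    (R : Set (T × T')) (hR : R = {x | ∃ t : ℝ, x = (p t, p' t)}) :
    (∀ x : T, ∃ y : T', (x, y) ∈ R) ∧
    (∀ y : T', ∃ x : T, (x, y) ∈ R) ∧
    (p 0, p' 0) ∈ R ∧
    (∀ (a b : T) (a' b' : T'), (a, a') ∈ R → (b, b') ∈ R →
      |dist a b - dist a' b'| ≤ 4 * ⨆ t : ℝ, |g t - g' t|) ∧
    GromovHausdorff.ghDist T T' ≤ 2 * ⨆ t : ℝ, |g t - g' t| := by
  have hbdd : BddAbove (range fun t => |g t - g' t|) :=
    (hg_cont.sub hg'_cont).abs.bddAbove_range_of_hasCompactSupport (hg_supp.sub hg'_supp).abs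
  have hrange : R = range fun t => (p t, p' t) :=
    hR.trans (ext fun _ => exists_congr fun _ => eq_comm)
  obtain ⟨⟨hleft, hright⟩, hdis, hgh⟩ := stmt15_general ⟨hp_surj, hp_dist⟩ ⟨hp'_surj, hp'_dist⟩
    (fun _ _ => ⟨0, forall_mem_image.2 fun x _ => hg_nonneg x⟩) hbdd
  exact hrange ▸ ⟨hleft, hright, mem_range_self 0, hdis, hgh⟩
end

section
/- Let h : [0, ∞) → ℝ be a monotone nondecreasing function, let D be a bounded open subset of ℝ^d, and let u, v : D → [0, ∞) be twice continuously differentiable functions such that Δu(x) ≥ h(u(x)) and Δv(x) ≤ h(v(x)) for every x ∈ D. Suppose that for every y ∈ ∂D, limsup_{D ∋ x → y} (u(x) - v(x)) ≤ 0. Then u(x) ≤ v(x) for every x ∈ D. -/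
/-- The Laplacian `Δf = ∑_{i=1}^d ∂²f/∂x_i²` of a function on `ℝ^d`. -/
noncomputable def laplacian {d : ℕ} (f : EuclideanSpace ℝ (Fin d) → ℝ)
    (x : EuclideanSpace ℝ (Fin d)) : ℝ :=
  ∑ i : Fin d,
    fderiv ℝ (fun y => fderiv ℝ f y (EuclideanSpace.single i 1)) x (EuclideanSpace.single i 1)

/-!
Suppose `w = u - v` is positive at some `x₀ ∈ D`. Adding `ε ‖x‖²` with `ε > 0` small compared with
`w x₀` and the size of `D` yields a function which near `∂D` stays below its value at `x₀`, hence
has a maximum point `x` in `D`, and there still `w x > 0`. The second derivative test gives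
`Δw(x) + 2dε ≤ 0`; but `v x < u x`, so monotonicity of `h` gives `Δv(x) ≤ Δu(x)`, i.e. `Δw(x) ≥ 0`.
-/

open Filter Topology
open scoped Laplacian InnerProductSpace

theorem deriv_deriv_nonpos_of_isLocalMax {g : ℝ → ℝ} {a : ℝ} (hmax : IsLocalMax g a)
    (hg : ContinuousAt g a) : deriv (deriv g) a ≤ 0 := by
  by_contra! hpos
  have hmin : IsLocalMin g a := isLocalMin_of_deriv_deriv_pos hpos hmax.deriv_eq_zero hg
  have hconst : g =ᶠ[𝓝 a] fun _ ↦ g a := by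
    filter_upwards [hmin, hmax] with t hge hle using le_antisymm hle hge
  have hzero : deriv (deriv g) a = 0 := by
    rw [hconst.deriv.deriv_eq]
    simp
  exact hpos.ne' hzero

section NormedSpace

variable {E F : Type*} [NormedAddCommGroup E] [NormedSpace ℝ E] [NormedAddCommGroup F]
  [NormedSpace ℝ F] {x : E}

theorem differentiableAt_fderiv_of_contDiffAt {f : E → F} (hf : ContDiffAt ℝ 2 f x) :
    DifferentiableAt ℝ (fderiv ℝ f) x :=
  (hf.fderiv_right (m := 1) (by norm_num)).differentiableAt (by simp)

theorem deriv_deriv_comp_add_smul {f : E → F} (hf : ContDiffAt ℝ 2 f x) (e : E) :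
    deriv (deriv fun t : ℝ ↦ f (x + t • e)) 0 = iteratedFDeriv ℝ 2 f x ![e, e] := by
  have hline (t : ℝ) : HasDerivAt (fun t : ℝ ↦ x + t • e) e t := by
    simpa using ((hasDerivAt_id t).smul_const e).const_add x
  have hline_tendsto : Tendsto (fun t : ℝ ↦ x + t • e) (𝓝 0) (𝓝 x) := by
    simpa using (hline 0).continuousAt.tendsto
  have hdiff : ∀ᶠ y in 𝓝 x, DifferentiableAt ℝ f y :=
    (hf.eventually (by simp)).mono fun y hy ↦ hy.differentiableAt (by simp)
  have hfirst : deriv (fun t : ℝ ↦ f (x + t • e)) =ᶠ[𝓝 0] fun t ↦ fderiv ℝ f (x + t • e) e := by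
    filter_upwards [hline_tendsto.eventually hdiff] with t ht
    exact (ht.hasFDerivAt.comp_hasDerivAt t (hline t)).deriv
  have hfderiv := (differentiableAt_fderiv_of_contDiffAt hf).hasFDerivAt
  have hsecond :
      HasDerivAt (fun t : ℝ ↦ fderiv ℝ f (x + t • e) e) (fderiv ℝ (fderiv ℝ f) x e e) 0 := by
    have happly : HasFDerivAt (fun y ↦ fderiv ℝ f y e) ((fderiv ℝ (fderiv ℝ f) x).flip e) x := by
      simpa using hfderiv.clm_apply (hasFDerivAt_const e x)
    exact happly.comp_hasDerivAt_of_eq 0 (hline 0) (by simp)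
  simp [hfirst.deriv_eq, hsecond.deriv, iteratedFDeriv_two_apply]

theorem iteratedFDeriv_two_nonpos_of_isLocalMax {f : E → ℝ} (hf : ContDiffAt ℝ 2 f x)
    (hmax : IsLocalMax f x) (e : E) : iteratedFDeriv ℝ 2 f x ![e, e] ≤ 0 := by
  have hline : ContinuousAt (fun t : ℝ ↦ x + t • e) 0 := by fun_prop
  rw [← deriv_deriv_comp_add_smul hf]
  apply deriv_deriv_nonpos_of_isLocalMax
  · exact IsMaxFilter.comp_tendsto (f := f) (by simpa [IsLocalMax] using hmax) hline
  · exact ContinuousAt.comp (g := f) (by simpa using hf.continuousAt) hline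

end NormedSpace

section Laplacian

variable {E : Type*} [NormedAddCommGroup E] [InnerProductSpace ℝ E] [FiniteDimensional ℝ E]
  {f : E → ℝ} {x : E}

theorem laplacian_nonpos_of_isLocalMax (hf : ContDiffAt ℝ 2 f x) (hmax : IsLocalMax f x) :
    Δ f x ≤ 0 := by
  rw [InnerProductSpace.laplacian_eq_iteratedFDeriv_stdOrthonormalBasis]
  exact Finset.sum_nonpos fun i _ ↦ iteratedFDeriv_two_nonpos_of_isLocalMax hf hmax _

theorem laplacian_norm_sq (x : E) :
    Δ (fun z : E ↦ ‖z‖ ^ 2) x = 2 * Module.finrank ℝ E := by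
  have hfderiv (y : E) : fderiv ℝ (fderiv ℝ fun z : E ↦ ‖z‖ ^ 2) x y y = 2 • inner ℝ y y := by
    rw [fderiv_norm_sq, fderiv_const_smul (innerSL ℝ).differentiableAt, ContinuousLinearMap.fderiv]
    rfl
  simp [InnerProductSpace.laplacian_eq_iteratedFDeriv_stdOrthonormalBasis,
    iteratedFDeriv_two_apply, hfderiv, mul_comm]

theorem laplacian_add_const_mul_norm_sq (hf : ContDiffAt ℝ 2 f x) (ε : ℝ) :
    Δ (fun z ↦ f z + ε * ‖z‖ ^ 2) x = Δ f x + ε * (2 * Module.finrank ℝ E) := by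
  have hnorm : ContDiffAt ℝ 2 (fun z : E ↦ ‖z‖ ^ 2) x := (contDiff_norm_sq ℝ).contDiffAt
  calc Δ (f + ε • fun z : E ↦ ‖z‖ ^ 2) x
      = Δ f x + Δ (ε • fun z : E ↦ ‖z‖ ^ 2) x := hf.laplacian_add (hnorm.const_smul ε)
    _ = Δ f x + ε * (2 * Module.finrank ℝ E) := by
      rw [InnerProductSpace.laplacian_smul ε hnorm, laplacian_norm_sq, smul_eq_mul]

theorem laplacian_eq_of_contDiffAt {d : ℕ} {f : EuclideanSpace ℝ (Fin d) → ℝ}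
    {x : EuclideanSpace ℝ (Fin d)} (hf : ContDiffAt ℝ 2 f x) : laplacian f x = Δ f x := by
  simp [InnerProductSpace.laplacian_eq_iteratedFDeriv_orthonormalBasis f
    (EuclideanSpace.basisFun (Fin d) ℝ), laplacian, iteratedFDeriv_two_apply,
    fderiv_clm_apply (differentiableAt_fderiv_of_contDiffAt hf) (differentiableAt_const _)]

end Laplacian

section Superlevel

variable {X β : Type*} [TopologicalSpace X] [LinearOrder β] {D : Set X} {w : X → β}

theorem isCompact_superlevel_of_eventually_lt {c : β} (hD : IsCompact (closure D))
    (hw : UpperSemicontinuousOn w D)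
    (hc : ∀ y ∈ closure D \ D, ∀ᶠ x in 𝓝[D] y, w x < c) :
    IsCompact {x ∈ D | c ≤ w x} := by
  rw [isCompact_iff_ultrafilter_le_nhds]
  intro F hF
  have hF_mem : ∀ᶠ x in F, x ∈ D ∧ c ≤ w x := le_principal_iff.1 hF
  have hFD : (F : Filter X) ≤ 𝓟 D := le_principal_iff.2 (hF_mem.mono fun _ hx ↦ hx.1)
  obtain ⟨y, hy, hFy⟩ :=
    hD.ultrafilter_le_nhds F (hFD.trans (principal_mono.2 subset_closure))
  have hfreq : ¬ ∀ᶠ x in 𝓝[D] y, w x < c := fun hlt ↦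
    let ⟨_, hx, hx'⟩ := ((hlt.filter_mono (le_inf hFy hFD)).and hF_mem).exists
    hx.not_ge hx'.2
  have hyD : y ∈ D := by_contra fun hyD ↦ hfreq (hc y ⟨hy, hyD⟩)
  exact ⟨y, ⟨hyD, not_lt.1 fun hlt ↦ hfreq (hw y hyD c hlt)⟩, hFy⟩

theorem exists_isMaxOn_of_eventually_lt {x₀ : X} (hD : IsCompact (closure D))
    (hw : UpperSemicontinuousOn w D) (hx₀ : x₀ ∈ D)
    (hlt : ∀ y ∈ closure D \ D, ∀ᶠ x in 𝓝[D] y, w x < w x₀) :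
    ∃ x ∈ D, IsMaxOn w D x := by
  have hK := isCompact_superlevel_of_eventually_lt hD hw hlt
  have hwK : UpperSemicontinuousOn w {x ∈ D | w x₀ ≤ w x} := hw.mono (Set.sep_subset _ _)
  have hne : {x ∈ D | w x₀ ≤ w x}.Nonempty := ⟨x₀, hx₀, le_rfl⟩
  obtain ⟨x, hx, hmax⟩ := hwK.exists_isMaxOn hne hK
  refine ⟨x, hx.1, fun y hy ↦ ?_⟩
  rcases le_total (w x₀) (w y) with hle | hle
  · exact hmax ⟨hy, hle⟩
  · exact hle.trans hx.2

end Superlevel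

section Comparison

variable {E : Type*} [NormedAddCommGroup E] [InnerProductSpace ℝ E] [FiniteDimensional ℝ E]
  [Nontrivial E] {D : Set E}

theorem nonpos_of_laplacian_nonneg_of_limsup_nonpos {w : E → ℝ} (hD_open : IsOpen D)
    (hD_bdd : Bornology.IsBounded D) (hw : ContDiffOn ℝ 2 w D)
    (hΔ : ∀ x ∈ D, 0 < w x → 0 ≤ Δ w x)
    (hbound : ∀ y ∈ frontier D, limsup (fun x ↦ (w x : EReal)) (𝓝[D] y) ≤ 0) :
    ∀ x ∈ D, w x ≤ 0 := by
  intro x₀ hx₀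
  by_contra! hpos
  obtain ⟨R, hR⟩ := hD_bdd.exists_norm_le
  obtain ⟨ε, hε, hεR⟩ : ∃ ε > 0, R ^ 2 * ε < w x₀ := exists_pos_mul_lt hpos (R ^ 2)
  let p : E → ℝ := fun z ↦ w z + ε * ‖z‖ ^ 2
  have hp_ge (x : E) : w x ≤ p x := le_add_of_nonneg_right (by positivity)
  have hp_le {x : E} (hx : x ∈ D) : p x ≤ w x + R ^ 2 * ε := by
    have : ‖x‖ ^ 2 ≤ R ^ 2 := by gcongr; exact hR x hx
    simp only [p, mul_comm ε]
    gcongr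
  have hp_cont : ContinuousOn p D := hw.continuousOn.add (by fun_prop)
  have hp_frontier : ∀ y ∈ closure D \ D, ∀ᶠ x in 𝓝[D] y, p x < p x₀ := by
    intro y hy
    have hlimsup : limsup (fun x ↦ (w x : EReal)) (𝓝[D] y) < ((w x₀ - R ^ 2 * ε : ℝ) : EReal) :=
      (hbound y (hD_open.frontier_eq ▸ hy)).trans_lt (by exact_mod_cast sub_pos.2 hεR)
    filter_upwards [eventually_lt_of_limsup_lt hlimsup, self_mem_nhdsWithin] with x hlt hx
    have hlt' : w x < w x₀ - R ^ 2 * ε := by exact_mod_cast hlt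
    linarith [hp_le hx, hp_ge x₀]
  obtain ⟨x, hx, hmax⟩ := exists_isMaxOn_of_eventually_lt hD_bdd.isCompact_closure
    hp_cont.upperSemicontinuousOn hx₀ hp_frontier
  have hwx : ContDiffAt ℝ 2 w x := hw.contDiffAt (hD_open.mem_nhds hx)
  have hΔp : Δ p x ≤ 0 := laplacian_nonpos_of_isLocalMax
    (hwx.add (contDiffAt_const.mul (contDiff_norm_sq ℝ).contDiffAt))
    (hmax.isLocalMax (hD_open.mem_nhds hx))
  have hw_pos : 0 < w x := by
    have : p x₀ ≤ p x := hmax hx₀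
    linarith [hp_le hx, hp_ge x₀]
  have hgain : 0 < ε * (2 * Module.finrank ℝ E) := by
    have : 0 < Module.finrank ℝ E := Module.finrank_pos
    positivity
  linarith [hΔ x hx hw_pos, laplacian_add_const_mul_norm_sq hwx ε]

theorem stmt16_general {s : Set ℝ} {h : E → ℝ → ℝ} {u v : E → ℝ}
    (hD_open : IsOpen D) (hD_bdd : Bornology.IsBounded D)
    (hh : ∀ x ∈ D, MonotoneOn (h x) s) (hu_mem : ∀ x ∈ D, u x ∈ s) (hv_mem : ∀ x ∈ D, v x ∈ s)
    (hu : ContDiffOn ℝ 2 u D) (hv : ContDiffOn ℝ 2 v D)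
    (hu_sub : ∀ x ∈ D, h x (u x) ≤ Δ u x) (hv_super : ∀ x ∈ D, Δ v x ≤ h x (v x))
    (hbound : ∀ y ∈ frontier D, limsup (fun x ↦ ((u x - v x : ℝ) : EReal)) (𝓝[D] y) ≤ 0) :
    ∀ x ∈ D, u x ≤ v x := by
  have hΔ : ∀ x ∈ D, 0 < (u - v) x → 0 ≤ Δ (u - v) x := by
    intro x hx hlt
    have hD : D ∈ 𝓝 x := hD_open.mem_nhds hx
    rw [(hu.contDiffAt hD).laplacian_sub (hv.contDiffAt hD), sub_nonneg]
    calc Δ v x ≤ h x (v x) := hv_super x hx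
      _ ≤ h x (u x) := hh x hx (hv_mem x hx) (hu_mem x hx) (sub_pos.1 hlt).le
      _ ≤ Δ u x := hu_sub x hx
  exact fun x hx ↦ sub_nonpos.1 <|
    nonpos_of_laplacian_nonneg_of_limsup_nonpos hD_open hD_bdd (hu.sub hv) hΔ hbound x hx

end Comparison

/-- Lemma 3.13 (comparison principle): let `h : [0,∞) → ℝ` be monotone nondecreasing, `D` a
bounded domain in `ℝ^d`, and `u, v : D → [0,∞)` of class `C²` with `Δu ≥ h(u)` and
`Δv ≤ h(v)` on `D`. If `limsup_{D ∋ x → y} (u(x) - v(x)) ≤ 0` for every `y ∈ ∂D`, then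
`u ≤ v` on `D`. -/
theorem stmt16 {d : ℕ} (hd : 1 ≤ d) (h : ℝ → ℝ) (hh : MonotoneOn h (Set.Ici (0 : ℝ)))
    (D : Set (EuclideanSpace ℝ (Fin d))) (hD_open : IsOpen D)
    (hD_bdd : Bornology.IsBounded D)
    (u v : EuclideanSpace ℝ (Fin d) → ℝ)
    (hu_nonneg : ∀ x ∈ D, 0 ≤ u x) (hv_nonneg : ∀ x ∈ D, 0 ≤ v x)
    (hu_smooth : ContDiffOn ℝ 2 u D) (hv_smooth : ContDiffOn ℝ 2 v D)
    (hu_sub : ∀ x ∈ D, h (u x) ≤ laplacian u x)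
    (hv_super : ∀ x ∈ D, laplacian v x ≤ h (v x))
    (hbound : ∀ y ∈ frontier D,
      Filter.limsup (fun x => ((u x - v x : ℝ) : EReal)) (nhdsWithin y D) ≤ 0) :
    ∀ x ∈ D, u x ≤ v x := by
  have : NeZero d := ⟨by lia⟩
  have hΔ {f} (hf : ContDiffOn ℝ 2 f D) {x} (hx : x ∈ D) : laplacian f x = Δ f x :=
    laplacian_eq_of_contDiffAt (hf.contDiffAt (hD_open.mem_nhds hx))
  exact stmt16_general hD_open hD_bdd (fun _ _ ↦ hh) hu_nonneg hv_nonneg hu_smooth hv_smooth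
    (fun x hx ↦ hΔ hu_smooth hx ▸ hu_sub x hx) (fun x hx ↦ hΔ hv_smooth hx ▸ hv_super x hx) hbound
end

section
/- The map sending a plane tree t to its height function (h_t(0), h_t(1), ..., h_t(#t - 1)), where h_t(n) = |u_n| is the length of the n-th vertex of t in lexicographical order, is injective: two plane trees with the same height function are equal. -/
/-!
Let `p` and `v` be consecutive vertices of a plane tree in lexicographical order, and write
`v = w ++ [j]`. The parent `w` satisfies `w ≤ p < w ++ [j]`, so `p = w ++ r` for some `r`, which
is empty or starts with a letter smaller than `j`. The siblings `w ++ [i]`, `1 ≤ i < j`, are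
vertices not exceeding `p`, which forces `j` to be one more than the first letter of `r`, or `1`
if `r` is empty. As `w` is a prefix of `p`, the vertex `v` is thus determined by `p` and the length
of `v`, and the vertices can be recovered one after the other from the height function.
-/

section List

variable {α β : Type*}

theorem strictMono_append_left [LinearOrder α] (u : List α) : StrictMono (u ++ ·) :=
  fun _ _ h ↦ List.append_left_lt h

theorem exists_eq_append_of_le_of_lt_append [LinearOrder α] {u v w : List α}
    (huv : u ≤ v) (hvw : v < u ++ w) : ∃ r < w, v = u ++ r := by
  induction u generalizing v with
  | nil => exact ⟨v, hvw, rfl⟩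
  | cons a u ih =>
    cases v with
    | nil => exact absurd (List.nil_lt_cons a u) huv.not_gt
    | cons b v =>
      rw [← not_lt, List.cons_lt_cons_iff, not_or, not_and, not_lt, not_lt] at huv
      rcases List.cons_lt_cons_iff.1 hvw with hba | ⟨rfl, hvw_tail⟩
      · exact absurd hba huv.1.not_gt
      · obtain ⟨r, hr, rfl⟩ := ih (huv.2 rfl) hvw_tail
        exact ⟨r, hr, rfl⟩

theorem lt_singleton_iff_headD_lt [LT α] {r : List α} {d a : α} (hd : d < a) :
    r < [a] ↔ r.headD d < a := by
  cases r <;> simp [List.cons_lt_cons_iff, hd]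

theorem scanl_map_eq_cons_of_isChain {f : α → β → α} {g : α → β} {a : α} {l : List α}
    (h : (a :: l).IsChain fun x y ↦ y = f x (g y)) : (l.map g).scanl f a = a :: l := by
  induction l generalizing a with
  | nil => rfl
  | cons b l ih =>
    obtain ⟨hab, hbl⟩ := List.isChain_cons_cons.1 h
    rw [List.map_cons, List.scanl_cons, ← hab, ih hbl]

theorem isChain_covBy_sort [LinearOrder α] (s : Finset α) :
    (s.sort (· ≤ ·)).IsChain
      fun a b ↦ ∃ (ha : a ∈ s) (hb : b ∈ s), (⟨a, ha⟩ : s) ⋖ ⟨b, hb⟩ := by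
  have hs := s.sortedLT_sort
  rw [List.isChain_iff_getElem]
  intro i hi
  refine ⟨(s.mem_sort _).1 (List.getElem_mem _), (s.mem_sort _).1 (List.getElem_mem _),
    hs.getElem_lt_getElem_iff.2 i.lt_succ_self, ?_⟩
  rintro ⟨c, hc⟩ hac hcb
  obtain ⟨k, hk, rfl⟩ := List.getElem_of_mem ((s.mem_sort (· ≤ ·)).2 hc)
  have hik : i < k := hs.getElem_lt_getElem_iff.1 hac
  have hki : k < i + 1 := hs.getElem_lt_getElem_iff.1 hcb
  omega

end List

/-- The vertex of height `n` that follows `p` in the lexicographical order of any plane tree in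
which the successor of `p` has height `n`: the ancestor `w` of `p` at height `n - 1`, extended by
one more than the letter following `w` in `p`. The default letter `0` makes this the first child
`p ++ [1]` when `w = p`; the value at `n = 0` is meaningless. -/
def nextVertex (p : List ℕ) (n : ℕ) : List ℕ :=
  p.take (n - 1) ++ [(p.drop (n - 1)).headD 0 + 1]

theorem nextVertex_append (w r : List ℕ) :
    nextVertex (w ++ r) (w.length + 1) = w ++ [r.headD 0 + 1] := by
  simp [nextVertex]

theorem vertexList_injective : Function.Injective vertexList :=
  Function.LeftInverse.injective (g := List.toFinset) fun t ↦ t.sort_toFinset (· ≤ ·)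

namespace IsPlaneTree

variable {t : Finset (List ℕ)} {w : List ℕ} {i j : ℕ}

theorem parent_mem (ht : IsPlaneTree t) (h : w ++ [j] ∈ t) : w ∈ t := by
  simpa using ht.2.1 (w ++ [j]) h (by simp)

theorem child_pos (ht : IsPlaneTree t) (h : w ++ [j] ∈ t) : 0 < j := by
  obtain ⟨k, hk⟩ := ht.2.2 w (ht.parent_mem h)
  exact ((hk j).1 h).1

theorem sibling_mem (ht : IsPlaneTree t) (h : w ++ [j] ∈ t) (hi : 0 < i) (hij : i ≤ j) :
    w ++ [i] ∈ t := by
  obtain ⟨k, hk⟩ := ht.2.2 w (ht.parent_mem h)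
  exact (hk i).2 ⟨hi, hij.trans ((hk j).1 h).2⟩

theorem eq_nextVertex_of_covBy (ht : IsPlaneTree t) {p v : t} (hpv : p ⋖ v) :
    (v : List ℕ) = nextVertex p (v : List ℕ).length := by
  obtain ⟨p, hp⟩ := p
  obtain ⟨v, hv⟩ := v
  have le_of_lt_v {u : List ℕ} (hu : u ∈ t) (huv : u < v) : u ≤ p :=
    hpv.le_of_lt (c := ⟨u, hu⟩) huv
  have p_lt_v : p < v := hpv.lt
  rcases List.eq_nil_or_concat' v with rfl | ⟨w, j, rfl⟩
  · exact absurd p_lt_v (List.not_lt_nil p)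
  have hj : 0 < j := ht.child_pos hv
  have w_lt : w < w ++ [j] := by
    simpa using strictMono_append_left w (List.nil_lt_cons j [])
  obtain ⟨r, hr, rfl⟩ :=
    exists_eq_append_of_le_of_lt_append (le_of_lt_v (ht.parent_mem hv) w_lt) p_lt_v
  have head_lt : r.headD 0 < j := (lt_singleton_iff_headD_lt hj).1 hr
  have le_head_succ : j ≤ r.headD 0 + 1 := by
    by_contra! hlt
    have sibling_le : w ++ [r.headD 0 + 1] ≤ w ++ r :=
      le_of_lt_v (ht.sibling_mem hv (Nat.succ_pos _) hlt.le)
        (strictMono_append_left w (List.cons_lt_cons_iff.2 (.inl hlt)))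
    have lt_sibling : w ++ r < w ++ [r.headD 0 + 1] :=
      strictMono_append_left w
        ((lt_singleton_iff_headD_lt (Nat.succ_pos _)).2 (Nat.lt_succ_self _))
    exact sibling_le.not_gt lt_sibling
  have hj_eq : j = r.headD 0 + 1 := by omega
  rw [List.length_append, List.length_singleton, nextVertex_append, ← hj_eq]

theorem isChain_vertexList (ht : IsPlaneTree t) :
    (vertexList t).IsChain fun p v ↦ v = nextVertex p v.length :=
  (isChain_covBy_sort t).imp fun _ _ ⟨_, _, hpv⟩ ↦ ht.eq_nextVertex_of_covBy hpv

theorem vertexList_eq_nil_cons (ht : IsPlaneTree t) :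
    vertexList t = [] :: vertexList (t.erase []) := by
  have root_le : ∀ u ∈ t.erase [], [] ≤ u := fun u _ ↦ not_lt.1 (List.not_lt_nil u)
  rw [vertexList, vertexList, ← Finset.sort_insert _ root_le (Finset.notMem_erase _ _),
    Finset.insert_erase ht.1]

theorem scanl_nextVertex_heights (ht : IsPlaneTree t) :
    ((vertexList t).map List.length).tail.scanl nextVertex [] = vertexList t := by
  have hchain := ht.isChain_vertexList
  rw [ht.vertexList_eq_nil_cons] at hchain ⊢
  exact scanl_map_eq_cons_of_isChain hchain

end IsPlaneTree

/-- The map sending a plane tree `t` to its height function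
`(h_t(0), …, h_t(#t - 1))`, where `h_t(n) = |u_n|`, is injective: two plane trees with the
same height function are equal. -/
theorem stmt18 (t t' : Finset (List ℕ)) (ht : IsPlaneTree t) (ht' : IsPlaneTree t')
    (hheight : (vertexList t).map List.length = (vertexList t').map List.length) :
    t = t' := by
  apply vertexList_injective
  rw [← ht.scanl_nextVertex_heights, hheight, ht'.scanl_nextVertex_heights]
end
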